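/- Let π be a unitary representation of BS(1,N) that admits a wavelet. Then π is weakly equivalent to the right regular representation of BS(1,N); in particular π extends to a faithful representation of the reduced C*-algebra C*_r(BS(1,N)). Moreover, every element of the C*-algebra generated by π(BS(1,N)) has connected spectrum. -/

import Mathlib

noncomputable section

open MeasureTheory Real Complex Filter Finset
open scoped ENNReal

/-! ### Basic instances for the circle -/

instance : MeasurableSpace Circle := borel Circle
instance : BorelSpace Circle := ⟨rfl⟩

/-- The point `e^{-2πit}` of the unit circle. -/
def ee (t : ℝ) : Circle := Circle.exp (-(2 * π * t))

/-- Normalized Lebesgue measure on the circle, realized as the image of Lebesgue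
measure on `[0,1)` under `t ↦ e^{-2πit}`. -/
def circleMeasure : Measure Circle := (volume.restrict (Set.Ico (0:ℝ) 1)).map ee

/-! ### The Baumslag–Solitar group `BS(1,N)` -/

/-- The single relation `u t u⁻¹ (t^N)⁻¹` defining `BS(1,N)`. -/
def BSRel (N : ℕ) : Set (FreeGroup Bool) :=
  {FreeGroup.of true * FreeGroup.of false * (FreeGroup.of true)⁻¹ * ((FreeGroup.of false) ^ N)⁻¹}

/-- The Baumslag–Solitar group `BS(1,N) = ⟨u,t | u t u⁻¹ = t^N⟩`. -/
abbrev BS (N : ℕ) := PresentedGroup (BSRel N)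

/-- The generator `u` of `BS(1,N)`. -/
def BS.u (N : ℕ) : BS N := PresentedGroup.of true

/-- The generator `t` of `BS(1,N)`. -/
def BS.t (N : ℕ) : BS N := PresentedGroup.of false

/-! ### The solenoid -/

/-- The `N`-solenoid, as a subgroup of the product of circles indexed by `ℤ`:
all sequences `(z_n)` with `z_{n+1}^N = z_n`. -/
def solenoidGroup (N : ℕ) : Subgroup (ℤ → Circle) where
  carrier := {z | ∀ n : ℤ, z (n + 1) ^ N = z n}
  one_mem' := by intro n; simp
  mul_mem' := by
    intro a b ha hb n
    simp only [Set.mem_setOf_eq, Pi.mul_apply, mul_pow] at *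
    rw [ha n, hb n]
  inv_mem' := by
    intro a ha n
    simp only [Set.mem_setOf_eq, Pi.inv_apply, inv_pow] at *
    rw [ha n]

/-- The `N`-solenoid as a type. -/
abbrev Solenoid (N : ℕ) := ↥(solenoidGroup N)

/-- The shift `S` on the solenoid: `(S z)_n = z_{n-1}`. -/
def shift (N : ℕ) (z : Solenoid N) : Solenoid N :=
  ⟨fun n => z.val (n - 1), by
    intro n
    have h := z.property (n - 1)
    simpa using h⟩

/-- The inverse `S⁻¹` of the shift on the solenoid: `(S⁻¹ z)_n = z_{n+1}`. -/
def shiftInv (N : ℕ) (z : Solenoid N) : Solenoid N :=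
  ⟨fun n => z.val (n + 1), fun n => z.property (n + 1)⟩

/-- Integer powers `Sⁿ` of the shift. -/
def shiftZ (N : ℕ) (n : ℤ) : Solenoid N → Solenoid N :=
  if 0 ≤ n then (shift N)^[n.toNat] else (shiftInv N)^[(-n).toNat]

/-- The measure `ν ∘ S`, defined by `(ν ∘ S)(E) = ν(S(E))`. -/
def measShift (N : ℕ) (ν : Measure (Solenoid N)) : Measure (Solenoid N) :=
  ν.map (shiftInv N)

/-- `ν` is quasi-invariant for the shift `S`: `ν ∘ S` and `ν` are mutually
absolutely continuous. -/
def QuasiInvariant (N : ℕ) (ν : Measure (Solenoid N)) : Prop :=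
  measShift N ν ≪ ν ∧ ν ≪ measShift N ν

/-- The shift `S` is ergodic with respect to `ν`. -/
def ShiftErgodic (N : ℕ) (ν : Measure (Solenoid N)) : Prop :=
  ∀ E : Set (Solenoid N), MeasurableSet E → shift N ⁻¹' E = E → ν E = 0 ∨ ν Eᶜ = 0

/-- A bounded measurable (`L^∞`-type) function. -/
def BddMeasurable {α : Type*} [MeasurableSpace α] (f : α → ℂ) : Prop :=
  Measurable f ∧ ∃ C : ℝ, ∀ x, ‖f x‖ ≤ C

/-! ### The representation `π_{ν,θ}` -/

/-- The pair of unitaries `U, T` on `L²(ν)` given by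
`Uξ = √Δ ⬝ θ ⬝ (ξ∘S)` (with `Δ = d(ν∘S)/dν`) and `(Tξ)(z) = z₀ ξ(z)`. -/
def IsPiNuTheta (N : ℕ) (ν : Measure (Solenoid N)) (θ : Solenoid N → Circle)
    (U T : unitary (Lp ℂ 2 ν →L[ℂ] Lp ℂ 2 ν)) : Prop :=
  (∀ ξ : Lp ℂ 2 ν,
      (((U : Lp ℂ 2 ν →L[ℂ] Lp ℂ 2 ν) ξ : Lp ℂ 2 ν) : Solenoid N → ℂ) =ᵐ[ν]
        fun z => (Real.sqrt (((measShift N ν).rnDeriv ν z).toReal) : ℂ) * (θ z : ℂ) *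
          (ξ : Solenoid N → ℂ) (shift N z)) ∧
  (∀ ξ : Lp ℂ 2 ν,
      (((T : Lp ℂ 2 ν →L[ℂ] Lp ℂ 2 ν) ξ : Lp ℂ 2 ν) : Solenoid N → ℂ) =ᵐ[ν]
        fun z => ((z.val 0 : Circle) : ℂ) * (ξ : Solenoid N → ℂ) z)

/-- `φ` is a cyclic vector for the (unitary) representation generated by `U` and `T`:
the only closed subspace containing `φ` and invariant under the group generated by
`U` and `T` is the whole space. -/
def cyclicVector {H : Type*} [NormedAddCommGroup H] [InnerProductSpace ℂ H]
    [CompleteSpace H] (U T : unitary (H →L[ℂ] H)) (φ : H) : Prop :=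
  ∀ K : Submodule ℂ H, IsClosed (K : Set H) → φ ∈ K →
    (∀ g ∈ Subgroup.closure ({U, T} : Set (unitary (H →L[ℂ] H))),
      ∀ v ∈ K, (g : H →L[ℂ] H) v ∈ K) → K = ⊤

/-! ### Filters and the Ruelle operator -/

/-- The quadrature mirror filter condition `R_{m₀} 1 = 1`, written out on `[0,1)`:
`(1/N) ∑_{k<N} |m₀(e^{-2πi(x+k)/N})|² = 1` for a.e. `x`. -/
def QMF (N : ℕ) (m₀ : Circle → ℂ) : Prop :=
  ∀ᵐ x ∂(volume.restrict (Set.Ico (0:ℝ) 1)),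
    (1 / N : ℝ) * ∑ k ∈ Finset.range N, ‖m₀ (ee ((x + k) / N))‖ ^ 2 = 1

/-- `h` is a fixed point of the Ruelle operator `R_{m₀}`:
`(1/N) ∑_{w^N = z} |m₀(w)|² h(w) = h(z)` for a.e. `z`, written out on `[0,1)`. -/
def RuelleFixed (N : ℕ) (m₀ : Circle → ℂ) (h : Circle → ℂ) : Prop :=
  ∀ᵐ x ∂(volume.restrict (Set.Ico (0:ℝ) 1)),
    (1 / N : ℂ) * ∑ k ∈ Finset.range N,
        (‖m₀ (ee ((x + k) / N))‖ ^ 2 : ℝ) * h (ee ((x + k) / N)) = h (ee x)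

/-- The wavelet representation of `BS(1,N)` associated to a filter `m₀`, realized
on `L²(m)` for a measure `m` on the solenoid: `Uξ = m₀ ⬝ (ξ∘S)` and `T` is
multiplication by the coordinate `z₀`. -/
def IsWaveletRepOn (N : ℕ) (m₀ : Circle → ℂ) (m : Measure (Solenoid N))
    (U T : unitary (Lp ℂ 2 m →L[ℂ] Lp ℂ 2 m)) : Prop :=
  (∀ ξ : Lp ℂ 2 m,
      (((U : Lp ℂ 2 m →L[ℂ] Lp ℂ 2 m) ξ : Lp ℂ 2 m) : Solenoid N → ℂ) =ᵐ[m]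
        fun z => m₀ (z.val 0) * (ξ : Solenoid N → ℂ) (shift N z)) ∧
  (∀ ξ : Lp ℂ 2 m,
      (((T : Lp ℂ 2 m →L[ℂ] Lp ℂ 2 m) ξ : Lp ℂ 2 m) : Solenoid N → ℂ) =ᵐ[m]
        fun z => ((z.val 0 : Circle) : ℂ) * (ξ : Solenoid N → ℂ) z)

/-- The measure `m` on the solenoid associated to a weight `W` (with `N W = |m₀|²`):
its `z₀`-marginal is normalized Lebesgue measure on the circle, and
`d(m∘S)/dm = N W`. -/
def IsAssociatedMeasure (N : ℕ) (W : Circle → ℝ) (m : Measure (Solenoid N)) : Prop :=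
  IsProbabilityMeasure m ∧
  m.map (fun z : Solenoid N => z.val 0) = circleMeasure ∧
  measShift N m = m.withDensity (fun z => ENNReal.ofReal (N * W (z.val 0)))

end

/-!
Write `π` for a representation with a wavelet and `ρ` for the right regular one.

*Weak equivalence.* Conjugation by a high power of `u` moves any finite subset of `BS(1,N)` into
`{u ^ j * t ^ k}`, where the orbit of a wavelet `ψ` is orthonormal. So `π(u ^ (-M)) ψ` has the
matrix coefficient `δ_{g,1}` on any given finite set, whence `‖ρ(a)‖ ≤ ‖π(a)‖`. Følner sets give
`‖π(a)‖ ≤ ‖ρ(a)‖` for every unitary representation `π`.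

*Projections.* The representation `V_x` of `BS(1,N)` on `ℓ²(ℤ)` induced from the character `e(x ·)`
of `ℤ[1/N]` factors through `C*_r(BS(1,N))`. Let `p` be a projection in `C*_r(BS(1,N))`. As `V_0(p)`
lies in the C⋆-algebra of the bilateral shift, whose spectrum is the circle, `V_0(p)` is `0` or `1`,
and we may assume that it is `0`. For `y ∈ ℤ[1/N]` the operator `V_{x+y}(p) - V_x(p)` is compact and
norm continuous in `x`, so the (integral) difference of the ranks of the two projections does not
depend on `x`. Hence the rank of `V_y(p)` is an additive function of `y ∈ ℤ[1/N]` with values in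
`ℕ`, so it vanishes. Averaging over `y` shows that the canonical trace of `p` vanishes, so
`p = 0`.

*Spectra.* By Kaplansky's theorem an algebra without nontrivial projections has no nontrivial
idempotents, and a disconnected spectrum would give one. That Riesz idempotent is the
Cauchy–Pompeiu integral of the resolvent against a cutoff function, so no contour is needed.
-/

namespace BaumslagSolitar

open scoped InnerProductSpace FourierTransform Topology CStarAlgebra ContDiff Manifold

section CauchyPompeiu

open MeasureTheory Topology Filter Set

variable {V : Type*} [NormedAddCommGroup V] [NormedSpace ℂ V]

/-- The Cauchy–Riemann operator `∂ₓ + i ∂ᵧ`, that is, twice the Wirtinger derivative `∂̄`. -/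
noncomputable def dbar (f : ℂ → V) (w : ℂ) : V :=
  fderiv ℝ f w 1 + Complex.I • fderiv ℝ f w Complex.I

theorem dbar_congr {f g : ℂ → V} {w : ℂ} (h : f =ᶠ[𝓝 w] g) : dbar f w = dbar g w := by
  simp only [dbar, h.fderiv_eq]

theorem dbar_const (c : V) (w : ℂ) : dbar (fun _ => c) w = 0 := by
  simp [dbar]

theorem dbar_sub {f g : ℂ → V} {w : ℂ} (hf : DifferentiableAt ℝ f w)
    (hg : DifferentiableAt ℝ g w) : dbar (f - g) w = dbar f w - dbar g w := by
  simp only [dbar, fderiv_sub hf hg, sub_apply, smul_sub]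
  abel

theorem continuous_dbar {f : ℂ → V} (hf : ContDiff ℝ 1 f) : Continuous (dbar f) := by
  have := hf.continuous_fderiv one_ne_zero
  unfold dbar
  fun_prop

theorem notMem_tsupport_dbar {f : ℂ → V} {c : V} {w : ℂ} (h : ∀ᶠ x in 𝓝 w, f x = c) :
    w ∉ tsupport (dbar f) := by
  rw [notMem_tsupport_iff_eventuallyEq]
  filter_upwards [h.eventually_nhds] with x hx
  rw [dbar_congr hx, dbar_const, Pi.zero_apply]

theorem tsupport_dbar_subset (f : ℂ → V) : tsupport (dbar f) ⊆ tsupport f := fun _ hw => by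
  contrapose! hw
  exact notMem_tsupport_dbar (notMem_tsupport_iff_eventuallyEq.mp hw)

theorem hasCompactSupport_dbar {f : ℂ → V} (hc : HasCompactSupport f) :
    HasCompactSupport (dbar f) :=
  hc.of_isClosed_subset (isClosed_tsupport _) (tsupport_dbar_subset f)

theorem dbar_smul_of_differentiableAt {χ : ℂ → ℂ} {f : ℂ → V} {w : ℂ}
    (hχ : DifferentiableAt ℝ χ w) (hf : DifferentiableAt ℂ f w) :
    dbar (χ • f) w = dbar χ w • f w := by
  have hf' : HasFDerivAt f ((fderiv ℂ f w).restrictScalars ℝ) w :=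
    hf.hasFDerivAt.restrictScalars ℝ
  have cauchyRiemann : fderiv ℂ f w Complex.I = Complex.I • fderiv ℂ f w 1 := by
    rw [← map_smul, smul_eq_mul, mul_one]
  simp only [dbar, (hχ.hasFDerivAt.smul hf').fderiv, add_apply, smul_apply,
    ContinuousLinearMap.smulRight_apply, ContinuousLinearMap.coe_restrictScalars',
    cauchyRiemann]
  match_scalars <;> ring_nf
  simp

theorem integral_dbar_eq_zero {f : ℂ → V} (hf : ContDiff ℝ 1 f) (hc : HasCompactSupport f) :
    ∫ w, dbar f w = 0 := by
  have hint (v : ℂ) : Integrable fun w => fderiv ℝ f w v := by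
    have := hf.continuous_fderiv one_ne_zero
    exact Continuous.integrable_of_hasCompactSupport (by fun_prop)
      ((hc.fderiv ℝ).comp_left (g := fun L : ℂ →L[ℝ] V => L v) rfl)
  have hzero (v : ℂ) : ∫ w, fderiv ℝ f w v = 0 := by
    simpa using integral_smul_fderiv_eq_neg_fderiv_smul_of_integrable (𝕜 := ℝ)
      (μ := (volume : Measure ℂ)) (f := fun _ => (1 : ℝ)) (g := f) (v := v) (by simp)
      (by simpa using hint v)
      (by simpa using hf.continuous.integrable_of_hasCompactSupport hc)
      (fun _ _ => differentiableAt_const _)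
      (fun x _ => hf.differentiable one_ne_zero x)
  have hintI : Integrable fun w => Complex.I • fderiv ℝ f w Complex.I := (hint _).smul _
  simp only [dbar]
  rw [integral_add (hint 1) hintI, integral_smul, hzero, hzero, smul_zero, add_zero]

/-- The Cauchy–Pompeiu integral `-(2π)⁻¹ ∫ (∂ₓ + i ∂ᵧ)χ • f`: it equals `χ l` if `f w = (w - l)⁻¹`
and, for `f` the resolvent of an element `a` of a Banach algebra, it is the holomorphic functional
calculus of `a` at `χ` as soon as `χ` is locally constant near the spectrum of `a`. -/
noncomputable def pompeiu (χ : ℂ → ℂ) (f : ℂ → V) : V :=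
  (-(2 * Real.pi : ℂ)⁻¹) • ∫ w, dbar χ w • f w

theorem integrable_smul_of_continuousOn {X : Type*} [TopologicalSpace X] [T2Space X]
    [MeasurableSpace X] [OpensMeasurableSpace X] [SecondCountableTopologyEither X V] {μ : Measure X}
    [IsFiniteMeasureOnCompacts μ] {φ : X → ℂ} {f : X → V} {K : Set X} (hφ : Continuous φ)
    (hK : IsCompact K) (hφK : ∀ x ∉ K, φ x = 0) (hf : ContinuousOn f K) :
    Integrable (fun x => φ x • f x) μ := by
  rw [← integrableOn_iff_integrable_of_support_subset (s := K)]
  · exact (hφ.continuousOn.smul hf).integrableOn_compact hK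
  · intro x hx
    contrapose! hx
    simp [hφK x hx]

variable {χ χ₁ χ₂ : ℂ → ℂ} {f : ℂ → V}

theorem integrable_dbar_smul (hχ : ContDiff ℝ 1 χ) (hc : HasCompactSupport χ)
    (hf : ContinuousOn f (tsupport (dbar χ))) : Integrable fun w => dbar χ w • f w :=
  integrable_smul_of_continuousOn (continuous_dbar hχ) (hasCompactSupport_dbar hc)
    (fun _ => image_eq_zero_of_notMem_tsupport) hf

theorem pompeiu_eq_zero [CompleteSpace V] (hχ : ContDiff ℝ 1 χ) (hc : HasCompactSupport χ)
    (hf : ∀ w ∈ tsupport χ, ∀ᶠ x in 𝓝 w, DifferentiableAt ℂ f x) : pompeiu χ f = 0 := by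
  have hts : tsupport (χ • f) ⊆ tsupport χ := tsupport_smul_subset_left χ f
  have hsmul : ContDiff ℝ 1 (χ • f) := contDiff_iff_contDiffAt.mpr fun w => by
    by_cases hw : w ∈ tsupport χ
    · exact hχ.contDiffAt.smul
        (((Complex.analyticAt_iff_eventually_differentiableAt.mpr (hf w hw)).contDiffAt
          (n := 1)).restrict_scalars ℝ)
    · exact contDiffAt_const.congr_of_eventuallyEq
        (notMem_tsupport_iff_eventuallyEq.mp fun h => hw (hts h))
  have hdbar (w : ℂ) : dbar χ w • f w = dbar (χ • f) w := by
    by_cases hw : w ∈ tsupport χ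
    · exact (dbar_smul_of_differentiableAt (hχ.differentiable one_ne_zero w)
        (hf w hw).self_of_nhds).symm
    · rw [image_eq_zero_of_notMem_tsupport fun h => hw (tsupport_dbar_subset χ h), zero_smul,
        image_eq_zero_of_notMem_tsupport fun h => hw (hts (tsupport_dbar_subset _ h))]
  simp only [pompeiu, hdbar]
  rw [integral_dbar_eq_zero hsmul (hc.of_isClosed_subset (isClosed_tsupport _) hts), smul_zero]

theorem pompeiu_sub (hχ₁ : ContDiff ℝ 1 χ₁) (hc₁ : HasCompactSupport χ₁) (hχ₂ : ContDiff ℝ 1 χ₂)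
    (hc₂ : HasCompactSupport χ₂) (hf₁ : ContinuousOn f (tsupport (dbar χ₁)))
    (hf₂ : ContinuousOn f (tsupport (dbar χ₂))) :
    pompeiu (χ₁ - χ₂) f = pompeiu χ₁ f - pompeiu χ₂ f := by
  have hsub (w : ℂ) : dbar (χ₁ - χ₂) w • f w = dbar χ₁ w • f w - dbar χ₂ w • f w := by
    rw [dbar_sub (hχ₁.differentiable one_ne_zero w) (hχ₂.differentiable one_ne_zero w), sub_smul]
  simp only [pompeiu, hsub]
  rw [integral_sub (integrable_dbar_smul hχ₁ hc₁ hf₁) (integrable_dbar_smul hχ₂ hc₂ hf₂), smul_sub]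

theorem pompeiu_congr [CompleteSpace V] (hχ₁ : ContDiff ℝ 1 χ₁)
    (hc₁ : HasCompactSupport χ₁) (hχ₂ : ContDiff ℝ 1 χ₂) (hc₂ : HasCompactSupport χ₂)
    (hf : ∀ w, (∀ᶠ x in 𝓝 w, DifferentiableAt ℂ f x) ∨ χ₁ =ᶠ[𝓝 w] χ₂ ∧ ∃ c, ∀ᶠ x in 𝓝 w, χ₁ x = c) :
    pompeiu χ₁ f = pompeiu χ₂ f := by
  have hcont (χ : ℂ → ℂ) (hχ : ∀ w, (∀ᶠ x in 𝓝 w, DifferentiableAt ℂ f x) ∨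
      ∃ c, ∀ᶠ x in 𝓝 w, χ x = c) : ContinuousOn f (tsupport (dbar χ)) := fun w hw => by
    rcases hχ w with h | ⟨c, hc⟩
    · exact h.self_of_nhds.continuousAt.continuousWithinAt
    · exact absurd hw (notMem_tsupport_dbar hc)
  rw [← sub_eq_zero, ← pompeiu_sub hχ₁ hc₁ hχ₂ hc₂
    (hcont χ₁ fun w => (hf w).imp_right And.right)
    (hcont χ₂ fun w => (hf w).imp_right fun ⟨h, c, hc⟩ => ⟨c, by
      filter_upwards [h, hc] with x hx hx'
      rw [← hx, hx']⟩)]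
  refine pompeiu_eq_zero (hχ₁.sub hχ₂) (hc₁.sub hc₂) fun w hw => ?_
  refine (hf w).resolve_right fun h => (notMem_tsupport_iff_eventuallyEq.mpr ?_) hw
  filter_upwards [h.1] with x hx
  simp [hx]

/-- A radial plateau function: `1` on the ball of radius `1` about `l` and `0` off the ball of
radius `√2`. -/
noncomputable def plateau (l w : ℂ) : ℂ := (Real.smoothTransition (2 - ‖w - l‖ ^ 2) : ℝ)

theorem contDiff_plateau (l : ℂ) : ContDiff ℝ 1 (plateau l) :=
  Complex.ofRealCLM.contDiff.comp (Real.smoothTransition.contDiff.comp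
    (contDiff_const.sub ((contDiff_id.sub contDiff_const).norm_sq ℝ)))

theorem hasCompactSupport_plateau (l : ℂ) : HasCompactSupport (plateau l) := by
  refine HasCompactSupport.intro (isCompact_closedBall l 2) fun w hw => ?_
  rw [Metric.mem_closedBall, dist_eq_norm, not_le] at hw
  rw [plateau, Real.smoothTransition.zero_of_nonpos (by nlinarith), Complex.ofReal_zero]

theorem plateau_eventually_eq_one (l : ℂ) : ∀ᶠ w in 𝓝 l, plateau l w = 1 := by
  filter_upwards [Metric.ball_mem_nhds l one_pos] with w hw
  rw [Metric.mem_ball, dist_eq_norm] at hw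
  rw [plateau, Real.smoothTransition.one_of_one_le (by nlinarith [norm_nonneg (w - l)]),
    Complex.ofReal_one]

theorem dbar_plateau (l w : ℂ) : dbar (plateau l) w =
    ((-2 * deriv Real.smoothTransition (2 - ‖w - l‖ ^ 2) : ℝ) : ℂ) * (w - l) := by
  have hnorm : HasFDerivAt (fun w : ℂ => 2 - ‖w - l‖ ^ 2) (-(2 • innerSL ℝ (w - l))) w :=
    ((hasFDerivAt_id w).sub_const l).norm_sq.const_sub 2
  have hs : HasDerivAt Real.smoothTransition (deriv Real.smoothTransition (2 - ‖w - l‖ ^ 2))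
      (2 - ‖w - l‖ ^ 2) :=
    (Real.smoothTransition.contDiff.differentiable one_ne_zero _).hasDerivAt
  have hp := Complex.ofRealCLM.hasFDerivAt.comp w (hs.comp_hasFDerivAt w hnorm)
  rw [dbar, show fderiv ℝ (plateau l) w = _ from hp.fderiv]
  apply Complex.ext <;> simp <;> ring

theorem integral_mul_deriv_smoothTransition :
    ∫ r in Ioi (0 : ℝ), r * (-2 * deriv Real.smoothTransition (2 - r ^ 2)) = -1 := by
  have hderiv (r : ℝ) : HasDerivAt (fun r => Real.smoothTransition (2 - r ^ 2))
      (r * (-2 * deriv Real.smoothTransition (2 - r ^ 2))) r := by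
    have h : HasDerivAt (fun r : ℝ => 2 - r ^ 2) (-(2 * r)) r := by
      simpa using (hasDerivAt_pow 2 r).const_sub 2
    convert! (Real.smoothTransition.contDiff.differentiable one_ne_zero _).hasDerivAt.comp r h
      using 1
    ring
  have hlim : Tendsto (fun r : ℝ => Real.smoothTransition (2 - r ^ 2)) atTop (𝓝 0) := by
    refine tendsto_const_nhds.congr' ?_
    filter_upwards [eventually_ge_atTop 2] with r hr
    rw [Real.smoothTransition.zero_of_nonpos (by nlinarith)]
  rw [integral_Ioi_of_hasDerivAt_of_nonpos' (fun r _ => hderiv r) (fun r hr => ?_) hlim]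
  · norm_num [Real.smoothTransition.one_of_one_le]
  · have := Real.smoothTransition.monotone.deriv_nonneg (x := 2 - r ^ 2)
    nlinarith [mem_Ioi.mp hr]

theorem pompeiu_plateau (l : ℂ) : pompeiu (plateau l) (fun w => (w - l)⁻¹) = 1 := by
  have hpolar (w : ℂ) (hw : w ≠ l) : dbar (plateau l) w • (w - l)⁻¹ =
      ((-2 * deriv Real.smoothTransition (2 - ‖w - l‖ ^ 2) : ℝ) : ℂ) := by
    rw [dbar_plateau, smul_eq_mul, mul_assoc, mul_inv_cancel₀ (sub_ne_zero.mpr hw), mul_one]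
  have hae : ∀ᵐ w : ℂ, w ≠ l := by simp [ae_iff]
  rw [pompeiu, integral_congr_ae (hae.mono hpolar), integral_sub_right_eq_self (fun w : ℂ =>
    ((-2 * deriv Real.smoothTransition (2 - ‖w‖ ^ 2) : ℝ) : ℂ)), integral_complex_ofReal,
    integral_fun_norm_addHaar volume fun r => -2 * deriv Real.smoothTransition (2 - r ^ 2)]
  simp only [Complex.finrank_real_complex, Nat.add_one_sub_one, pow_one, smul_eq_mul,
    integral_mul_deriv_smoothTransition, measureReal_def, Complex.volume_ball]
  simp
  field_simp

theorem pompeiu_const_mul (c : ℂ) (hχ : ContDiff ℝ 1 χ) (f : ℂ → V) :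
    pompeiu (fun w => c * χ w) f = c • pompeiu χ f := by
  have hmul (w : ℂ) : dbar (fun w => c * χ w) w • f w = c • dbar χ w • f w := by
    rw [dbar, fderiv_const_mul (hχ.differentiable one_ne_zero w)]
    simp only [dbar, smul_apply, smul_eq_mul, smul_smul]
    ring_nf
  simp only [pompeiu, hmul]
  rw [integral_smul, smul_comm]

theorem pompeiu_inv_sub {c l : ℂ} (hχ : ContDiff ℝ 1 χ) (hc : HasCompactSupport χ)
    (hl : ∀ᶠ w in 𝓝 l, χ w = c) : pompeiu χ (fun w => (w - l)⁻¹) = c := by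
  rw [pompeiu_congr (χ₂ := fun w => c * plateau l w) hχ hc (contDiff_const.mul (contDiff_plateau l))
    (hasCompactSupport_plateau l).mul_left fun w => ?_, pompeiu_const_mul c (contDiff_plateau l),
    pompeiu_plateau, smul_eq_mul, mul_one]
  rcases eq_or_ne w l with rfl | hw
  · refine Or.inr ⟨?_, c, hl⟩
    filter_upwards [hl, plateau_eventually_eq_one w] with x hx hx'
    rw [hx, hx', mul_one]
  · refine Or.inl ?_
    filter_upwards [isOpen_ne.mem_nhds hw] with x hx
    exact ((differentiableAt_id.sub_const l).inv (sub_ne_zero.mpr hx))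

theorem map_pompeiu {W : Type*} [NormedAddCommGroup W] [NormedSpace ℂ W] [CompleteSpace V]
    [CompleteSpace W] (L : V →L[ℂ] W) {f : ℂ → V} (hχ : ContDiff ℝ 1 χ) (hc : HasCompactSupport χ)
    (hf : ContinuousOn f (tsupport (dbar χ))) : L (pompeiu χ f) = pompeiu χ fun w => L (f w) := by
  simp only [pompeiu, map_smul, ← L.integral_comp_comm (integrable_dbar_smul hχ hc hf)]

theorem pompeiu_congr_right {f g : ℂ → V} (h : EqOn f g (tsupport (dbar χ))) :
    pompeiu χ f = pompeiu χ g := by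
  have hfg (w : ℂ) : dbar χ w • f w = dbar χ w • g w := by
    by_cases hw : w ∈ tsupport (dbar χ)
    · rw [h hw]
    · rw [image_eq_zero_of_notMem_tsupport hw, zero_smul, zero_smul]
  simp only [pompeiu, hfg]

theorem pompeiu_comm {F : ℂ → ℂ → V} (hχ₁ : ContDiff ℝ 1 χ₁)
    (hc₁ : HasCompactSupport χ₁) (hχ₂ : ContDiff ℝ 1 χ₂) (hc₂ : HasCompactSupport χ₂)
    (hF : ContinuousOn (Function.uncurry F) (tsupport (dbar χ₁) ×ˢ tsupport (dbar χ₂))) :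
    pompeiu χ₁ (fun z => pompeiu χ₂ (F z)) = pompeiu χ₂ (fun w => pompeiu χ₁ (F · w)) := by
  have hd₁ := continuous_dbar hχ₁
  have hd₂ := continuous_dbar hχ₂
  have hint : Integrable (fun x : ℂ × ℂ => (dbar χ₁ x.1 * dbar χ₂ x.2) • Function.uncurry F x)
      (volume.prod volume) :=
    integrable_smul_of_continuousOn (by fun_prop)
      ((hasCompactSupport_dbar hc₁).isCompact.prod (hasCompactSupport_dbar hc₂).isCompact)
      (fun x hx => by
        rw [mem_prod, not_and_or] at hx
        rcases hx with h | h <;> simp [image_eq_zero_of_notMem_tsupport h]) hF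
  have hswap := integral_integral_swap (f := fun z w => (dbar χ₁ z * dbar χ₂ w) • F z w) hint
  have hleft (z : ℂ) : dbar χ₁ z • pompeiu χ₂ (F z) =
      (-(2 * Real.pi : ℂ)⁻¹) • ∫ w, (dbar χ₁ z * dbar χ₂ w) • F z w := by
    rw [pompeiu, smul_comm, ← integral_smul]
    simp only [mul_smul]
  have hright (w : ℂ) : dbar χ₂ w • pompeiu χ₁ (F · w) =
      (-(2 * Real.pi : ℂ)⁻¹) • ∫ z, (dbar χ₁ z * dbar χ₂ w) • F z w := by
    rw [pompeiu, smul_comm, ← integral_smul]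
    simp only [mul_comm (dbar χ₁ _), mul_smul]
  rw [pompeiu, pompeiu]
  simp only [hleft, hright]
  rw [integral_smul, integral_smul, hswap]

theorem pompeiu_sub_right {f g : ℂ → V} (hχ : ContDiff ℝ 1 χ) (hc : HasCompactSupport χ)
    (hf : ContinuousOn f (tsupport (dbar χ))) (hg : ContinuousOn g (tsupport (dbar χ))) :
    pompeiu χ (fun w => f w - g w) = pompeiu χ f - pompeiu χ g := by
  simp only [pompeiu, smul_sub]
  rw [integral_sub (integrable_dbar_smul hχ hc hf) (integrable_dbar_smul hχ hc hg), smul_sub]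

end CauchyPompeiu

section Riesz

open MeasureTheory Topology Filter Set

variable {A : Type*} [NormedRing A] [NormedAlgebra ℂ A] [CompleteSpace A] {a : A} {χ χ₁ χ₂ : ℂ → ℂ}

theorem differentiableAt_resolvent {w : ℂ} (hw : w ∉ spectrum ℂ a) :
    DifferentiableAt ℂ (resolvent a) w :=
  (spectrum.hasDerivAt_resolvent_const_left (notMem_compl_iff.mp hw)).differentiableAt

theorem eventually_differentiableAt_resolvent {w : ℂ} (hw : w ∉ spectrum ℂ a) :
    ∀ᶠ x in 𝓝 w, DifferentiableAt ℂ (resolvent a) x :=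
  ((spectrum.isClosed a).isOpen_compl.eventually_mem hw).mono fun _ => differentiableAt_resolvent

omit [CompleteSpace A] in
theorem resolvent_mul_sub {w : ℂ} (hw : w ∉ spectrum ℂ a) (l : ℂ) :
    resolvent a w * (algebraMap ℂ A l - a) = 1 - (w - l) • resolvent a w := by
  rw [← Ring.inverse_mul_cancel _ (spectrum.notMem_iff.mp hw), Algebra.smul_def,
    Algebra.commutes, map_sub, resolvent]
  noncomm_ring

omit [CompleteSpace A] in
theorem sub_mul_resolvent {w : ℂ} (hw : w ∉ spectrum ℂ a) (l : ℂ) :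
    (algebraMap ℂ A l - a) * resolvent a w = 1 - (w - l) • resolvent a w := by
  rw [← Ring.mul_inverse_cancel _ (spectrum.notMem_iff.mp hw), Algebra.smul_def, map_sub,
    resolvent]
  noncomm_ring

/-- A test function on `ℂ` that is locally constant near `K`: those for which `pompeiu` computes
the holomorphic functional calculus of an element with spectrum `K`. -/
structure IsCutoff (K : Set ℂ) (χ : ℂ → ℂ) : Prop where
  contDiff : ContDiff ℝ 1 χ
  hasCompactSupport : HasCompactSupport χ
  eventually_eq : ∀ l ∈ K, ∃ c, ∀ᶠ w in 𝓝 l, χ w = c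

theorem IsCutoff.disjoint_tsupport_dbar {K : Set ℂ} (hχ : IsCutoff K χ) :
    Disjoint (tsupport (dbar χ)) K :=
  disjoint_right.mpr fun l hl =>
    let ⟨_, hc⟩ := hχ.eventually_eq l hl
    notMem_tsupport_dbar hc

theorem IsCutoff.continuousOn_inv_sub_smul_resolvent (hχ : IsCutoff (spectrum ℂ a) χ) {c l : ℂ}
    (hl : ∀ᶠ w in 𝓝 l, χ w = c) :
    ContinuousOn (fun w => (w - l)⁻¹ • resolvent a w) (tsupport (dbar χ)) := fun w hw =>
  have hwl : w - l ≠ 0 := sub_ne_zero.mpr (by rintro rfl; exact notMem_tsupport_dbar hl hw)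
  (((continuousAt_id.sub continuousAt_const).inv₀ hwl).smul (differentiableAt_resolvent
    (disjoint_left.mp hχ.disjoint_tsupport_dbar hw)).continuousAt).continuousWithinAt

theorem IsCutoff.continuousOn_resolvent (hχ : IsCutoff (spectrum ℂ a) χ) :
    ContinuousOn (resolvent a) (tsupport (dbar χ)) := fun _ hw =>
  (differentiableAt_resolvent
    (disjoint_left.mp hχ.disjoint_tsupport_dbar hw)).continuousAt.continuousWithinAt

theorem pompeiu_inv_sub_smul_one_sub (hχ : IsCutoff (spectrum ℂ a) χ) {c l : ℂ}
    (hl : ∀ᶠ w in 𝓝 l, χ w = c) :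
    pompeiu χ (fun w => (w - l)⁻¹ • (1 - (w - l) • resolvent a w)) =
      algebraMap ℂ A c - pompeiu χ (resolvent a) := by
  have hne {w : ℂ} (hw : w ∈ tsupport (dbar χ)) : w - l ≠ 0 :=
    sub_ne_zero.mpr (by rintro rfl; exact notMem_tsupport_dbar hl hw)
  have hinv : ContinuousOn (fun w => (w - l)⁻¹) (tsupport (dbar χ)) :=
    (continuousOn_id.sub continuousOn_const).inv₀ fun _ => hne
  rw [pompeiu_congr_right (g := fun w => algebraMapCLM ℂ A (w - l)⁻¹ - resolvent a w)
      fun w hw => ?_,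
    pompeiu_sub_right (f := fun w => algebraMapCLM ℂ A (w - l)⁻¹) hχ.contDiff hχ.hasCompactSupport
      ((algebraMapCLM ℂ A).continuous.comp_continuousOn hinv) hχ.continuousOn_resolvent,
    ← map_pompeiu _ hχ.contDiff hχ.hasCompactSupport hinv,
    pompeiu_inv_sub hχ.contDiff hχ.hasCompactSupport hl, algebraMapCLM_apply]
  simp only [smul_sub, inv_smul_smul₀ (hne hw), algebraMapCLM_apply, Algebra.algebraMap_eq_smul_one]

theorem sub_mul_pompeiu (hχ : IsCutoff (spectrum ℂ a) χ) {c l : ℂ} (hl : ∀ᶠ w in 𝓝 l, χ w = c) :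
    (algebraMap ℂ A l - a) * pompeiu χ (fun w => (w - l)⁻¹ • resolvent a w) =
      algebraMap ℂ A c - pompeiu χ (resolvent a) := by
  rw [← pompeiu_inv_sub_smul_one_sub hχ hl,
    show (algebraMap ℂ A l - a) * pompeiu χ _ =
      ContinuousLinearMap.mul ℂ A (algebraMap ℂ A l - a) (pompeiu χ _) from rfl,
    map_pompeiu _ hχ.contDiff hχ.hasCompactSupport (hχ.continuousOn_inv_sub_smul_resolvent hl)]
  refine pompeiu_congr_right fun w hw => ?_
  simp only [ContinuousLinearMap.mul_apply', mul_smul_comm,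
    sub_mul_resolvent (disjoint_left.mp hχ.disjoint_tsupport_dbar hw)]

theorem pompeiu_mul_sub (hχ : IsCutoff (spectrum ℂ a) χ) {c l : ℂ} (hl : ∀ᶠ w in 𝓝 l, χ w = c) :
    pompeiu χ (fun w => (w - l)⁻¹ • resolvent a w) * (algebraMap ℂ A l - a) =
      algebraMap ℂ A c - pompeiu χ (resolvent a) := by
  rw [← pompeiu_inv_sub_smul_one_sub hχ hl,
    show pompeiu χ _ * (algebraMap ℂ A l - a) =
      (ContinuousLinearMap.mul ℂ A).flip (algebraMap ℂ A l - a) (pompeiu χ _) from rfl,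
    map_pompeiu _ hχ.contDiff hχ.hasCompactSupport (hχ.continuousOn_inv_sub_smul_resolvent hl)]
  refine pompeiu_congr_right fun w hw => ?_
  simp only [ContinuousLinearMap.flip_apply, ContinuousLinearMap.mul_apply', smul_mul_assoc,
    resolvent_mul_sub (disjoint_left.mp hχ.disjoint_tsupport_dbar hw)]

theorem pompeiu_resolvent_congr (hχ₁ : IsCutoff (spectrum ℂ a) χ₁)
    (hχ₂ : IsCutoff (spectrum ℂ a) χ₂) (h : ∀ l ∈ spectrum ℂ a, χ₁ =ᶠ[𝓝 l] χ₂) :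
    pompeiu χ₁ (resolvent a) = pompeiu χ₂ (resolvent a) := by
  refine pompeiu_congr hχ₁.contDiff hχ₁.hasCompactSupport hχ₂.contDiff hχ₂.hasCompactSupport
    fun w => ?_
  by_cases hw : w ∈ spectrum ℂ a
  · exact Or.inr ⟨h w hw, hχ₁.eventually_eq w hw⟩
  · exact Or.inl (eventually_differentiableAt_resolvent hw)

theorem pompeiu_resolvent_mul_one_sub (hχ₁ : IsCutoff (spectrum ℂ a) χ₁)
    (hχ₂ : IsCutoff (spectrum ℂ a) χ₂) (h : ∀ z ∈ tsupport χ₁, ∀ᶠ w in 𝓝 z, χ₂ w = 1) :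
    pompeiu χ₁ (resolvent a) * (1 - pompeiu χ₂ (resolvent a)) = 0 := by
  have hd₁ {z : ℂ} (hz : z ∈ tsupport (dbar χ₁)) : z ∉ spectrum ℂ a :=
    disjoint_left.mp hχ₁.disjoint_tsupport_dbar hz
  have hd₂ {w : ℂ} (hw : w ∈ tsupport (dbar χ₂)) : w ∉ tsupport χ₁ := fun hw' =>
    notMem_tsupport_dbar (h w hw') hw
  have hinner {z : ℂ} (hz : z ∈ tsupport (dbar χ₁)) :
      resolvent a z * (1 - pompeiu χ₂ (resolvent a)) =
        pompeiu χ₂ fun w => (w - z)⁻¹ • resolvent a w := by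
    rw [← map_one (algebraMap ℂ A), ← sub_mul_pompeiu hχ₂ (h z (tsupport_dbar_subset _ hz)),
      ← mul_assoc, resolvent_mul_sub (hd₁ hz), sub_self, zero_smul, sub_zero, one_mul]
  have houter {w : ℂ} (hw : w ∈ tsupport (dbar χ₂)) :
      pompeiu χ₁ (fun z => (w - z)⁻¹ • resolvent a w) = 0 := by
    refine pompeiu_eq_zero hχ₁.contDiff hχ₁.hasCompactSupport fun z hz => ?_
    filter_upwards [isOpen_ne.mem_nhds fun hzw : z = w => hd₂ hw (hzw ▸ hz)] with x hx
    exact ((differentiableAt_id.const_sub w).inv (sub_ne_zero.mpr hx.symm)).smul_const _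
  calc pompeiu χ₁ (resolvent a) * (1 - pompeiu χ₂ (resolvent a))
      = pompeiu χ₁ fun z => resolvent a z * (1 - pompeiu χ₂ (resolvent a)) :=
        map_pompeiu ((ContinuousLinearMap.mul ℂ A).flip _) hχ₁.contDiff hχ₁.hasCompactSupport
          hχ₁.continuousOn_resolvent
    _ = pompeiu χ₁ fun z => pompeiu χ₂ fun w => (w - z)⁻¹ • resolvent a w :=
        pompeiu_congr_right fun z => hinner
    _ = pompeiu χ₂ fun w => pompeiu χ₁ fun z => (w - z)⁻¹ • resolvent a w := by
        refine pompeiu_comm hχ₁.contDiff hχ₁.hasCompactSupport hχ₂.contDiff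
          hχ₂.hasCompactSupport fun x hx => ?_
        have hx₂ : x.2 - x.1 ≠ 0 := sub_ne_zero.mpr fun hx' =>
          hd₂ hx.2 (hx' ▸ tsupport_dbar_subset _ hx.1)
        exact ((continuousAt_snd.sub continuousAt_fst).inv₀ hx₂).smul
          ((differentiableAt_resolvent (disjoint_left.mp hχ₂.disjoint_tsupport_dbar
            hx.2)).continuousAt.comp continuousAt_snd) |>.continuousWithinAt
    _ = pompeiu χ₂ 0 := pompeiu_congr_right fun w => houter
    _ = 0 := by simp [pompeiu]

theorem exists_isCutoff {K L : Set ℂ} (hK : IsCompact K) (hL : IsClosed L) (hKL : Disjoint K L) :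
    ∃ χ, IsCutoff (K ∪ L) χ ∧ tsupport χ ⊆ Lᶜ ∧ ∀ z ∈ K, ∀ᶠ w in 𝓝 z, χ w = 1 := by
  obtain ⟨r, hr⟩ := hK.isBounded.subset_ball 0
  obtain ⟨f, h0, h1, -⟩ := exists_contMDiffMap_zero_one_nhds_of_isClosed (n := 1) 𝓘(ℝ, ℂ)
    (s := L ∪ (Metric.ball 0 r)ᶜ) (t := K) (hL.union Metric.isOpen_ball.isClosed_compl) hK.isClosed
    (disjoint_union_left.mpr ⟨hKL.symm, disjoint_compl_left_iff_subset.mpr hr⟩)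
  rw [eventually_nhdsSet_iff_forall] at h0 h1
  set χ : ℂ → ℂ := fun w => (f w : ℝ) with hχ
  have hzero (z : ℂ) (hz : z ∈ L ∪ (Metric.ball 0 r)ᶜ) : ∀ᶠ w in 𝓝 z, χ w = 0 := by
    filter_upwards [h0 z hz] with w hw
    simp [hχ, hw]
  have hone (z : ℂ) (hz : z ∈ K) : ∀ᶠ w in 𝓝 z, χ w = 1 := by
    filter_upwards [h1 z hz] with w hw
    simp [hχ, hw]
  have hsupp (z : ℂ) (hz : z ∈ tsupport χ) : z ∉ L ∪ (Metric.ball 0 r)ᶜ := fun hz' =>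
    notMem_tsupport_iff_eventuallyEq.mpr (hzero z hz') hz
  refine ⟨χ, ⟨Complex.ofRealCLM.contDiff.comp f.contMDiff.contDiff, ?_, ?_⟩,
    fun z hz hzL => hsupp z hz (Or.inl hzL), hone⟩
  · refine (isCompact_closedBall (0 : ℂ) r).of_isClosed_subset (isClosed_tsupport _) fun z hz => ?_
    exact Metric.ball_subset_closedBall (not_not.mp fun h => hsupp z hz (Or.inr h))
  · rintro l (hl | hl)
    exacts [⟨1, hone l hl⟩, ⟨0, hzero l (Or.inl hl)⟩]

theorem IsCutoff.mono {K L : Set ℂ} (hχ : IsCutoff L χ) (h : K ⊆ L) : IsCutoff K χ :=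
  ⟨hχ.contDiff, hχ.hasCompactSupport, fun l hl => hχ.eventually_eq l (h hl)⟩

theorem notMem_spectrum_of_pompeiu_resolvent (hχ : IsCutoff (spectrum ℂ a) χ) {c l : ℂ}
    (hl : ∀ᶠ w in 𝓝 l, χ w = c) (h : IsUnit (algebraMap ℂ A c - pompeiu χ (resolvent a))) :
    l ∉ spectrum ℂ a :=
  spectrum.notMem_iff.mpr <| isUnit_iff_exists_and_exists.mpr
    ⟨⟨_, by rw [← mul_assoc, sub_mul_pompeiu hχ hl]; exact h.mul_val_inv⟩,
      ⟨_, by rw [mul_assoc, pompeiu_mul_sub hχ hl]; exact h.val_inv_mul⟩⟩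

theorem exists_isIdempotentElem_of_spectrum_subset_union {u v : Set ℂ} (hu : IsClosed u)
    (hv : IsClosed v) (hσ : spectrum ℂ a ⊆ u ∪ v) (huv : Disjoint u v) :
    ∃ e : A, IsIdempotentElem e ∧ (e = 0 → spectrum ℂ a ⊆ v) ∧ (e = 1 → spectrum ℂ a ⊆ u) := by
  obtain ⟨χ₁, hχ₁, hsupp₁, hone₁⟩ :=
    exists_isCutoff ((spectrum.isCompact a).inter_right hu) hv (huv.mono_left inter_subset_right)
  obtain ⟨χ₂, hχ₂, hsupp₂, hone₂⟩ :=
    exists_isCutoff hχ₁.hasCompactSupport hv (disjoint_left.mpr fun z hz => hsupp₁ hz)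
  have hzero {χ : ℂ → ℂ} (hsupp : tsupport χ ⊆ vᶜ) {z : ℂ} (hz : z ∈ v) :
      ∀ᶠ w in 𝓝 z, χ w = 0 :=
    notMem_tsupport_iff_eventuallyEq.mp fun h => hsupp h hz
  have hmem {z : ℂ} (hz : z ∈ spectrum ℂ a) (hzu : z ∈ u) : z ∈ tsupport χ₁ :=
    subset_tsupport _ (by simp [(hone₁ z ⟨hz, hzu⟩).self_of_nhds])
  replace hχ₁ : IsCutoff (spectrum ℂ a) χ₁ :=
    hχ₁.mono fun z hz => (hσ hz).imp_left fun hzu => ⟨hz, hzu⟩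
  replace hχ₂ : IsCutoff (spectrum ℂ a) χ₂ := hχ₂.mono fun z hz => (hσ hz).imp_left (hmem hz)
  have hcongr : pompeiu χ₁ (resolvent a) = pompeiu χ₂ (resolvent a) := by
    refine pompeiu_resolvent_congr hχ₁ hχ₂ fun l hl => ?_
    rcases hσ hl with hlu | hlv
    · filter_upwards [hone₁ l ⟨hl, hlu⟩, hone₂ l (hmem hl hlu)] with w h₁ h₂
      rw [h₁, h₂]
    · filter_upwards [hzero hsupp₁ hlv, hzero hsupp₂ hlv] with w h₁ h₂
      rw [h₁, h₂]
  have hmul := pompeiu_resolvent_mul_one_sub hχ₁ hχ₂ hone₂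
  rw [← hcongr, mul_sub, mul_one, sub_eq_zero] at hmul
  refine ⟨pompeiu χ₁ (resolvent a), hmul.symm, fun h z hz => ?_, fun h z hz => ?_⟩
  · refine (hσ hz).resolve_left fun hzu => ?_
    exact notMem_spectrum_of_pompeiu_resolvent hχ₁ (hone₁ z ⟨hz, hzu⟩) (by simp [h]) hz
  · refine (hσ hz).resolve_right fun hzv => ?_
    exact notMem_spectrum_of_pompeiu_resolvent hχ₁ (hzero hsupp₁ hzv) (by simp [h]) hz

theorem isConnected_spectrum [Nontrivial A] (hA : ∀ e : A, IsIdempotentElem e → e = 0 ∨ e = 1)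
    (a : A) : IsConnected (spectrum ℂ a) := by
  refine ⟨spectrum.nonempty a, (isPreconnected_iff_subset_of_fully_disjoint_closed
    (spectrum.isClosed a)).mpr fun u v hu hv huv hd => ?_⟩
  obtain ⟨e, he, h0, h1⟩ := exists_isIdempotentElem_of_spectrum_subset_union hu hv huv hd
  exact (hA e he).symm.imp h1 h0

end Riesz

section Idempotents

variable {A : Type*} [CStarAlgebra A]

theorem isUnit_one_add_star_mul_self (a : A) : IsUnit (1 + star a * a) := by
  have h : (-1 : ℝ) ∉ spectrum ℝ (star a * a) := fun h => by
    linarith [spectrum_star_mul_self_nonneg _ h]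
  rw [spectrum.notMem_iff, ← IsUnit.neg_iff] at h
  convert! h using 1
  rw [map_neg, map_one]
  abel

/- Kaplansky: `z = 1 + (e - e*)*(e - e*)` is invertible and commutes with `e` and `e*`, and
`e e* z⁻¹` is the projection onto the range of `e`. -/
theorem exists_isStarProjection_mul_eq {e : A} (he : IsIdempotentElem e) :
    ∃ p, IsStarProjection p ∧ p * e = e ∧ e * p = p := by
  obtain ⟨z, hz⟩ := isUnit_one_add_star_mul_self (e - star e)
  have hee (x : A) : e * (e * x) = e * x := by rw [← mul_assoc, he.eq]
  have hzz : (z : A) = 1 - e - star e + star e * e + e * star e := by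
    rw [hz, star_sub, star_star]
    simp only [sub_mul, mul_sub, he.eq, he.star.eq]
    abel
  have hez : e * z = e * star e * e := by
    rw [hzz]
    simp only [mul_add, mul_sub, he.eq, hee, mul_one, mul_assoc]
    abel
  have hze : z * e = e * star e * e := by
    rw [hzz]
    simp only [add_mul, sub_mul, he.eq, one_mul, mul_assoc]
    abel
  have hzsa : star (z : A) = z := by simp [hz]
  have hcomm : Commute e (z⁻¹ : Aˣ) := Commute.units_inv_right (hez.trans hze.symm)
  have hcomm' : Commute (star e) (z⁻¹ : Aˣ) :=
    Commute.units_inv_right <| by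
      simpa only [hzsa] using commute_star_star.mpr (show Commute e z from hez.trans hze.symm)
  have hzinv : star ((z⁻¹ : Aˣ) : A) = (z⁻¹ : Aˣ) := by
    rw [← Units.coe_star_inv, show star z = z from Units.ext hzsa]
  have hpe : e * star e * (z⁻¹ : Aˣ) * e = e := by
    rw [mul_assoc, ← hcomm.eq, ← mul_assoc, ← hez, mul_assoc, z.mul_inv, mul_one]
  refine ⟨e * star e * (z⁻¹ : Aˣ), ⟨?_, ?_⟩, hpe, by simp only [mul_assoc, hee]⟩
  · calc e * star e * (z⁻¹ : Aˣ) * (e * star e * (z⁻¹ : Aˣ))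
        = e * star e * (z⁻¹ : Aˣ) * e * (star e * (z⁻¹ : Aˣ)) := by simp only [mul_assoc]
      _ = e * star e * (z⁻¹ : Aˣ) := by rw [hpe, mul_assoc]
  · rw [IsSelfAdjoint, star_mul, star_mul, star_star, hzinv]
    exact ((hcomm.mul_left hcomm').symm).eq

theorem eq_zero_or_one_of_isIdempotentElem
    (hA : ∀ p : A, IsStarProjection p → p = 0 ∨ p = 1) {e : A} (he : IsIdempotentElem e) :
    e = 0 ∨ e = 1 := by
  obtain ⟨p, hp, hpe, hep⟩ := exists_isStarProjection_mul_eq he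
  rcases hA p hp with rfl | rfl
  · exact Or.inl (by rw [← hpe, zero_mul])
  · exact Or.inr (by rw [← hep, mul_one])

theorem isConnected_spectrum_of_mem [Nontrivial A] (S : StarSubalgebra ℂ A)
    [IsClosed (S : Set A)] (hS : ∀ p : S, IsStarProjection p → p = 0 ∨ p = 1) {a : A}
    (ha : a ∈ S) : IsConnected (spectrum ℂ a) := by
  have h := isConnected_spectrum (fun _ => eq_zero_or_one_of_isIdempotentElem hS)
    (⟨a, ha⟩ : S)
  rwa [StarSubalgebra.spectrum_eq] at h

theorem eq_zero_or_one_of_isIdempotentElem_elemental {a : A}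
    [IsStarNormal a] (ha : IsPreconnected (spectrum ℂ a)) {p : StarAlgebra.elemental ℂ a}
    (hp : IsIdempotentElem p) : p = 0 ∨ p = 1 := by
  have : PreconnectedSpace (spectrum ℂ a) := Subtype.preconnectedSpace ha
  set e := continuousFunctionalCalculus a
  set f := e.symm p
  have hf (z : spectrum ℂ a) : f z = 0 ∨ f z = 1 :=
    IsIdempotentElem.iff_eq_zero_or_one.mp (DFunLike.congr_fun (hp.map e.symm) z)
  have hconst : f = 0 ∨ f = 1 := by
    by_cases hzero : ∀ z, f z = 0
    · exact .inl (ContinuousMap.ext hzero)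
    · obtain ⟨z, hz⟩ := not_forall.mp hzero
      refine .inr (ContinuousMap.ext fun w => ?_)
      have hdisc : IsDiscrete ({0, 1} : Set ℂ) := (Set.toFinite _).isDiscrete
      have := isPreconnected_univ.constant_of_mapsTo hdisc f.continuous.continuousOn
        (fun z _ => hf z) (Set.mem_univ w) (Set.mem_univ z)
      rw [this, (hf z).resolve_left hz]
      rfl
  refine hconst.imp (fun h => ?_) fun h => ?_
  · rw [← e.apply_symm_apply p, show e.symm p = 0 from h, map_zero]
  · rw [← e.apply_symm_apply p, show e.symm p = 1 from h, map_one]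

end Idempotents

section GroupCStar

variable {G A B : Type*} [Group G] [CStarAlgebra A] [CStarAlgebra B]

/-- The extension of a unitary representation `π` to the group algebra, evaluated at `a`:
this is `π(a) = ∑ g, a g • π g`. -/
noncomputable def groupEval (π : G →* unitary A) : (G →₀ ℂ) →ₗ[ℂ] A :=
  Finsupp.linearCombination ℂ fun g => (π g : A)

/-- The C⋆-algebra generated by a unitary representation `π`. -/
abbrev groupCStar (π : G →* unitary A) : StarSubalgebra ℂ A :=
  (StarAlgebra.adjoin ℂ (Set.range fun g => (π g : A))).topologicalClosure

instance (π : G →* unitary A) : IsClosed (groupCStar π : Set A) :=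
  StarSubalgebra.isClosed_topologicalClosure _

/-- `σ` is weakly contained in `π`, expressed by an inequality of C⋆-seminorms on the group
algebra. -/
def WeaklyContained (σ : G →* unitary B) (π : G →* unitary A) : Prop :=
  ∀ a : G →₀ ℂ, ‖groupEval σ a‖ ≤ ‖groupEval π a‖

theorem groupEval_single (π : G →* unitary A) (g : G) (c : ℂ) :
    groupEval π (Finsupp.single g c) = c • (π g : A) :=
  Finsupp.linearCombination_single ..

theorem coe_adjoin_range (π : G →* unitary A) :
    (StarAlgebra.adjoin ℂ (Set.range fun g => (π g : A)) : Set A) = Set.range (groupEval π) := by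
  have hstar : star (Set.range fun g => (π g : A)) = Set.range fun g => (π g : A) := by
    ext x
    constructor
    · rintro ⟨g, hg⟩
      exact ⟨g⁻¹, by simp [map_inv, ← Unitary.star_eq_inv, hg]⟩
    · rintro ⟨g, rfl⟩
      exact ⟨g⁻¹, by simp [map_inv, ← Unitary.star_eq_inv]⟩
  have hclosure : Submonoid.closure (Set.range fun g => (π g : A)) =
      MonoidHom.mrange ((unitary A).subtype.comp π) := by
    rw [← Submonoid.closure_eq (MonoidHom.mrange ((unitary A).subtype.comp π)),
      MonoidHom.coe_mrange]
    rfl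
  change ((StarAlgebra.adjoin ℂ (Set.range fun g => (π g : A))).toSubalgebra : Set A) = _
  rw [StarAlgebra.adjoin_toSubalgebra, hstar, Set.union_self, ← Subalgebra.coe_toSubmodule,
    Algebra.adjoin_eq_span, hclosure, MonoidHom.coe_mrange, groupEval, ← LinearMap.coe_range,
    Finsupp.range_linearCombination]
  rfl

/-- The generator `π g`, as an element of `groupCStar π`. -/
def groupCStar.of (π : G →* unitary A) (g : G) : groupCStar π :=
  ⟨π g, StarSubalgebra.le_topologicalClosure _ (StarAlgebra.subset_adjoin ℂ _ ⟨g, rfl⟩)⟩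

theorem groupEval_mem (π : G →* unitary A) (a : G →₀ ℂ) : groupEval π a ∈ groupCStar π :=
  StarSubalgebra.le_topologicalClosure _ <|
    (coe_adjoin_range π).symm.subset (Set.mem_range_self a)

/-- The map `groupEval π`, with values in `groupCStar π`. -/
noncomputable def groupCStar.eval (π : G →* unitary A) : (G →₀ ℂ) →ₗ[ℂ] groupCStar π :=
  (groupEval π).codRestrict (groupCStar π).toSubalgebra.toSubmodule (groupEval_mem π)

theorem groupCStar.denseRange_eval (π : G →* unitary A) : DenseRange (groupCStar.eval π) := by
  rw [DenseRange, Topology.IsInducing.subtypeVal.dense_iff]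
  rintro ⟨x, hx⟩
  rw [StarSubalgebra.topologicalClosure_coe, coe_adjoin_range] at hx
  rwa [← Set.range_comp]

theorem groupCStar.eval_single (π : G →* unitary A) (g : G) (c : ℂ) :
    groupCStar.eval π (Finsupp.single g c) = c • groupCStar.of π g :=
  Subtype.ext (groupEval_single π g c)

@[elab_as_elim]
theorem groupCStar.induction {π : G →* unitary A} {P : groupCStar π → Prop}
    (of : ∀ g, P (groupCStar.of π g)) (add : ∀ x y, P x → P y → P (x + y))
    (smul : ∀ (c : ℂ) x, P x → P (c • x)) (closed : IsClosed {x | P x}) (x : groupCStar π) :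
    P x := by
  refine (groupCStar.denseRange_eval π).induction_on x closed fun a => ?_
  induction a using Finsupp.induction_linear with
  | zero => simpa using smul 0 _ (of 1)
  | add a b ha hb => simpa using add _ _ ha hb
  | single g c => simpa only [groupCStar.eval_single] using smul c _ (of g)

theorem groupCStar.of_mul (π : G →* unitary A) (g h : G) :
    groupCStar.of π (g * h) = groupCStar.of π g * groupCStar.of π h :=
  Subtype.ext (by simp [groupCStar.of])

theorem groupCStar.of_one (π : G →* unitary A) : groupCStar.of π 1 = 1 :=
  Subtype.ext (by simp [groupCStar.of])

theorem groupCStar.star_of (π : G →* unitary A) (g : G) :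
    star (groupCStar.of π g) = groupCStar.of π g⁻¹ :=
  Subtype.ext (by simp [groupCStar.of, ← Unitary.star_eq_inv])

theorem WeaklyContained.exists_starAlgHom {σ : G →* unitary B} {π : G →* unitary A}
    (h : WeaklyContained σ π) :
    ∃ F : groupCStar π →⋆ₐ[ℂ] B, ∀ g, F (groupCStar.of π g) = σ g := by
  set F : groupCStar π →L[ℂ] B := (groupEval σ).extendOfNorm (groupCStar.eval π)
  have hF (g : G) : F (groupCStar.of π g) = σ g := by
    have := LinearMap.extendOfNorm_eq (f := groupEval σ) (groupCStar.denseRange_eval π)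
      ⟨1, fun a => by rw [one_mul]; exact h a⟩ (Finsupp.single g 1)
    simpa only [groupCStar.eval_single, groupEval_single, one_smul] using this
  have hmul_of (g : G) (y : groupCStar π) : F (groupCStar.of π g * y) = σ g * F y := by
    induction y using groupCStar.induction with
    | of k => rw [← groupCStar.of_mul, hF, hF, map_mul, Submonoid.coe_mul]
    | add x y hx hy => rw [mul_add, map_add, map_add, mul_add, hx, hy]
    | smul c x hx => rw [mul_smul_comm, map_smul, map_smul, mul_smul_comm, hx]
    | closed => exact isClosed_eq (by fun_prop) (by fun_prop)
  have hmul (x y : groupCStar π) : F (x * y) = F x * F y := by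
    induction x using groupCStar.induction with
    | of g => rw [hmul_of, hF]
    | add x z hx hz => rw [add_mul, map_add, map_add, add_mul, hx, hz]
    | smul c x hx => rw [smul_mul_assoc, map_smul, map_smul, smul_mul_assoc, hx]
    | closed => exact isClosed_eq (by fun_prop) (by fun_prop)
  have hstar (x : groupCStar π) : F (star x) = star (F x) := by
    induction x using groupCStar.induction with
    | of g => rw [groupCStar.star_of, hF, hF, map_inv, ← Unitary.star_eq_inv, Unitary.coe_star]
    | add x z hx hz => rw [star_add, map_add, map_add, star_add, hx, hz]
    | smul c x hx => rw [star_smul, map_smul, map_smul, star_smul, hx]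
    | closed => exact isClosed_eq (by fun_prop) (by fun_prop)
  have hone : F 1 = 1 := by rw [← groupCStar.of_one, hF, map_one, OneMemClass.coe_one]
  exact ⟨{ AlgHom.ofLinearMap (F : groupCStar π →ₗ[ℂ] B) hone hmul with map_star' := hstar }, hF⟩

theorem groupCStar.map_eval {σ : G →* unitary B} {π : G →* unitary A}
    {F : groupCStar π →⋆ₐ[ℂ] B} (hF : ∀ g, F (groupCStar.of π g) = σ g) (a : G →₀ ℂ) :
    F (groupCStar.eval π a) = groupEval σ a := by
  induction a using Finsupp.induction_linear with
  | zero => simp only [map_zero]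
  | add a b ha hb => simp only [map_add, ha, hb]
  | single g c => rw [eval_single, groupEval_single, map_smul, hF]

theorem groupCStar.map_mem {σ : G →* unitary B} {π : G →* unitary A} {F : groupCStar π →⋆ₐ[ℂ] B}
    (hF : ∀ g, F (groupCStar.of π g) = σ g) (x : groupCStar π) : F x ∈ groupCStar σ := by
  induction x using groupCStar.induction with
  | of g => exact (hF g).symm ▸ (groupCStar.of σ g).2
  | add x y hx hy => rw [map_add]; exact add_mem hx hy
  | smul c x hx => rw [map_smul]; exact SMulMemClass.smul_mem c hx
  | closed =>
    exact (StarSubalgebra.isClosed_topologicalClosure _).preimage (map_continuous F)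

theorem WeaklyContained.injective {σ : G →* unitary B} {π : G →* unitary A}
    (h : WeaklyContained π σ) {F : groupCStar π →⋆ₐ[ℂ] B}
    (hF : ∀ g, F (groupCStar.of π g) = σ g) : Function.Injective F := by
  have hcont : Continuous F := map_continuous F
  have hle (x : groupCStar π) : ‖x‖ ≤ ‖F x‖ := by
    refine (groupCStar.denseRange_eval π).induction_on x
      (isClosed_le (by fun_prop) (by fun_prop)) fun a => ?_
    rw [groupCStar.map_eval hF]
    exact h a
  exact (injective_iff_map_eq_zero F).mpr fun x hx => by simpa [hx] using hle x

end GroupCStar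

section Group

open Finset

variable {N : ℕ}

theorem u_mul_t_mul_inv : BS.u N * BS.t N * (BS.u N)⁻¹ = BS.t N ^ N := by
  rw [← mul_inv_eq_one]
  exact PresentedGroup.one_of_mem (rels := BSRel N) rfl

theorem u_mul_t_zpow (k : ℤ) : BS.u N * BS.t N ^ k = BS.t N ^ (k * N) * BS.u N := by
  rw [← mul_inv_eq_iff_eq_mul, ← conj_zpow, u_mul_t_mul_inv, mul_comm, zpow_mul, zpow_natCast]

theorem u_pow_mul_t_zpow (n : ℕ) (k : ℤ) :
    BS.u N ^ n * BS.t N ^ k = BS.t N ^ (k * N ^ n) * BS.u N ^ n := by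
  induction n generalizing k with
  | zero => simp
  | succ n ih =>
    rw [pow_succ, mul_assoc, u_mul_t_zpow, ← mul_assoc, ih, mul_assoc, pow_succ', mul_assoc]

/-- The element `u⁻ᴹ tᵏ uⁱ`, a normal form for the elements of `BS(1,N)`. -/
def normalForm (N M : ℕ) (k i : ℤ) : BS N := (BS.u N ^ M)⁻¹ * BS.t N ^ k * BS.u N ^ i

theorem u_mul_normalForm (M : ℕ) (k i : ℤ) :
    BS.u N * normalForm N M k i = normalForm N M (k * N) (i + 1) := by
  rw [normalForm, normalForm, add_comm i, zpow_add, zpow_one]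
  simp only [← mul_assoc]
  rw [mul_assoc _ (BS.t N ^ (k * N)), ← u_mul_t_zpow, ← mul_assoc, (Commute.self_pow _ _).inv_right]

theorem u_inv_mul_normalForm (M : ℕ) (k i : ℤ) :
    (BS.u N)⁻¹ * normalForm N M k i = normalForm N (M + 1) k i := by
  simp only [normalForm, pow_succ, mul_inv_rev, mul_assoc]

theorem t_zpow_mul_normalForm (M : ℕ) (l k i : ℤ) :
    BS.t N ^ l * normalForm N M k i = normalForm N M (l * N ^ M + k) i := by
  rw [normalForm, normalForm, zpow_add, eq_comm, mul_assoc, inv_mul_eq_iff_eq_mul]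
  simp only [← mul_assoc, u_pow_mul_t_zpow, mul_inv_cancel_right]

theorem normalForm_succ (M : ℕ) (k i : ℤ) :
    normalForm N (M + 1) (k * N) (i + 1) = normalForm N M k i := by
  rw [← u_inv_mul_normalForm, ← u_mul_normalForm, inv_mul_cancel_left]

theorem normalForm_mul_normalForm (M n : ℕ) (k l i : ℤ) :
    normalForm N M k (M + n) * normalForm N M l i = normalForm N M (k + l * N ^ n) (n + i) := by
  calc normalForm N M k (M + n) * normalForm N M l i
      = (BS.u N ^ M)⁻¹ * BS.t N ^ k * (BS.u N ^ n * BS.t N ^ l) * BS.u N ^ i := by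
        simp only [normalForm]
        group
    _ = normalForm N M (k + l * N ^ n) (n + i) := by
        rw [u_pow_mul_t_zpow, normalForm, zpow_add, zpow_add, zpow_natCast]
        simp only [mul_assoc]

theorem exists_eq_normalForm (g : BS N) : ∃ M k i, g = normalForm N M k i := by
  have hg : g ∈ Subgroup.closure (Set.range (PresentedGroup.of (rels := BSRel N))) := by
    rw [PresentedGroup.closure_range_of]
    trivial
  induction hg using Subgroup.closure_induction_left with
  | one => exact ⟨0, 0, 0, by simp [normalForm]⟩
  | mul_left x hx y _ ih =>
    obtain ⟨M, k, i, rfl⟩ := ih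
    obtain ⟨_ | _, rfl⟩ := hx
    · exact ⟨M, _, i, by simpa using! t_zpow_mul_normalForm M 1 k i⟩
    · exact ⟨M, _, _, u_mul_normalForm M k i⟩
  | inv_mul_cancel x hx y _ ih =>
    obtain ⟨M, k, i, rfl⟩ := ih
    obtain ⟨_ | _, rfl⟩ := hx
    · exact ⟨M, _, i, by simpa using! t_zpow_mul_normalForm M (-1) k i⟩
    · exact ⟨M + 1, k, i, u_inv_mul_normalForm M k i⟩

theorem exists_forall_eq_normalForm (S : Finset (BS N)) :
    ∃ M, ∀ g ∈ S, ∃ k i, g = normalForm N M k i := by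
  choose m hm using exists_eq_normalForm (N := N)
  refine ⟨S.sup m, fun g hg => ?_⟩
  have key (M : ℕ) (hM : m g ≤ M) : ∃ k i, g = normalForm N M k i := by
    induction M, hM using Nat.le_induction with
    | base => exact hm g
    | succ M _ ih =>
      obtain ⟨k, i, h⟩ := ih
      exact ⟨k * N, i + 1, h.trans (normalForm_succ M k i).symm⟩
  exact key _ (Finset.le_sup hg)

theorem exists_forall_conj_eq (S : Finset (BS N)) :
    ∃ M : ℕ, ∀ g ∈ S, ∃ j k : ℤ,
      BS.u N ^ M * g * (BS.u N ^ M)⁻¹ = BS.u N ^ j * BS.t N ^ k := by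
  classical
  obtain ⟨M, hM⟩ := exists_forall_eq_normalForm (S.image (·⁻¹))
  refine ⟨M, fun g hg => ?_⟩
  obtain ⟨k, i, h⟩ := hM g⁻¹ (Finset.mem_image_of_mem _ hg)
  refine ⟨M - i, -k, ?_⟩
  rw [← inv_inv g, h, normalForm]
  group

/-- The action of `ℤ` on `ℝ` in which `j` multiplies by `N ^ j`. -/
noncomputable def scaling (N : ℕ) [NeZero N] : Multiplicative ℤ →* MulAut (Multiplicative ℝ) :=
  (MulAutMultiplicative ℝ).symm.toMonoidHom.comp
    (AddAut.mulLeft.comp (zpowersHom ℝˣ (Units.mk0 (N : ℝ) (NeZero.ne (N : ℝ)))))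

theorem scaling_apply [NeZero N] (j : Multiplicative ℤ) (x : Multiplicative ℝ) :
    scaling N j x = .ofAdd ((N : ℝ) ^ j.toAdd * x.toAdd) := by
  change Multiplicative.ofAdd
    (((Units.mk0 (N : ℝ) (NeZero.ne (N : ℝ)) ^ j.toAdd : ℝˣ) : ℝ) * x.toAdd) = _
  rw [Units.val_zpow_eq_zpow_val, Units.val_mk0]

/-- The homomorphism from `BS(1,N)` to `ℝ ⋊ ℤ` that sends `t` to the translation by `1` and `u`
to the generator of `ℤ`. -/
noncomputable def toSemidirect (N : ℕ) [NeZero N] :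
    BS N →* Multiplicative ℝ ⋊[scaling N] Multiplicative ℤ :=
  PresentedGroup.toGroup (rels := BSRel N)
    (f := fun b => if b then .inr (.ofAdd 1) else .inl (.ofAdd 1)) <| by
      rintro _ rfl
      simp only [map_mul, map_inv, map_pow, FreeGroup.lift_apply_of, if_true, Bool.false_eq_true,
        if_false]
      rw [mul_inv_eq_one, ← map_inv, ← SemidirectProduct.inl_aut, scaling_apply, ← map_pow,
        ← ofAdd_nsmul]
      simp

variable [NeZero N]

/-- The exponent of `u` in an element of `BS(1,N)`. -/
noncomputable def height (g : BS N) : ℤ := (toSemidirect N g).right.toAdd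

/-- The translation part of the affine map `x ↦ N ^ j * x + r` attached to an element of
`BS(1,N)`. -/
noncomputable def translation (g : BS N) : ℝ := (toSemidirect N g).left.toAdd

theorem height_mul (g h : BS N) : height (g * h) = height g + height h := by
  simp [height]

theorem translation_mul (g h : BS N) :
    translation (g * h) = translation g + N ^ height g * translation h := by
  simp [translation, height, scaling_apply]

theorem toSemidirect_t_zpow (k : ℤ) : toSemidirect N (BS.t N ^ k) = .inl (.ofAdd (k : ℝ)) := by
  have ht : toSemidirect N (BS.t N) = .inl (.ofAdd 1) := by simp [toSemidirect, BS.t]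
  rw [map_zpow, ht, ← map_zpow, ← ofAdd_zsmul, zsmul_one]

theorem toSemidirect_u_zpow (i : ℤ) : toSemidirect N (BS.u N ^ i) = .inr (.ofAdd i) := by
  have hu : toSemidirect N (BS.u N) = .inr (.ofAdd 1) := by simp [toSemidirect, BS.u]
  rw [map_zpow, hu, ← map_zpow, ← ofAdd_zsmul, zsmul_one, Int.cast_id]

theorem toSemidirect_normalForm (M : ℕ) (k i : ℤ) :
    toSemidirect N (normalForm N M k i) = ⟨.ofAdd (k / (N : ℝ) ^ M), .ofAdd (i - M)⟩ := by
  rw [normalForm, map_mul, map_mul, ← zpow_natCast (BS.u N), ← zpow_neg]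
  simp only [toSemidirect_t_zpow, toSemidirect_u_zpow]
  ext
  · simp [scaling_apply, div_eq_inv_mul, -ofAdd_neg]
  · simp [sub_eq_neg_add]

theorem translation_normalForm (M : ℕ) (k i : ℤ) :
    translation (normalForm N M k i) = k / (N : ℝ) ^ M := by
  rw [translation, toSemidirect_normalForm, toAdd_ofAdd]

theorem normalForm_inj {M : ℕ} {k i k' i' : ℤ} :
    normalForm N M k i = normalForm N M k' i' ↔ k = k' ∧ i = i' := by
  refine ⟨fun h => ?_, by rintro ⟨rfl, rfl⟩; rfl⟩
  have hs := congrArg (toSemidirect N) h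
  have hN : (N : ℝ) ^ M ≠ 0 := pow_ne_zero _ (NeZero.ne _)
  simpa only [toSemidirect_normalForm, SemidirectProduct.ext_iff, EmbeddingLike.apply_eq_iff_eq,
    div_left_inj' hN, Int.cast_inj, sub_left_inj] using hs

theorem toSemidirect_injective : Function.Injective (toSemidirect N) := by
  refine (injective_iff_map_eq_one _).mpr fun g hg => ?_
  obtain ⟨M, k, i, rfl⟩ := exists_eq_normalForm g
  have hN : (N : ℝ) ^ M ≠ 0 := pow_ne_zero _ (NeZero.ne _)
  simp only [toSemidirect_normalForm, SemidirectProduct.ext_iff, SemidirectProduct.one_left,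
    SemidirectProduct.one_right, ofAdd_eq_one, div_eq_zero_iff, hN, or_false, Int.cast_eq_zero,
    sub_eq_zero] at hg
  simp [normalForm, hg]

theorem eq_one_of_translation_eq_zero {g : BS N} (hr : translation g = 0) (hj : height g = 0) :
    g = 1 :=
  toSemidirect_injective <| by
    rw [map_one]
    exact SemidirectProduct.ext hr hj

theorem exists_forall_translation_mul_pow_eq (S : Finset (BS N)) :
    ∃ M : ℕ, ∀ g ∈ S, ∃ k : ℤ, translation g * (N : ℝ) ^ M = k := by
  obtain ⟨M, hM⟩ := exists_forall_eq_normalForm S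
  refine ⟨M, fun g hg => ?_⟩
  obtain ⟨k, i, rfl⟩ := hM g hg
  exact ⟨k, by rw [translation_normalForm, div_mul_cancel₀ _ (pow_ne_zero _ (NeZero.ne _))]⟩

end Group

section FolnerSets

open Finset

/-- The Følner condition for the right translations of a discrete group. The finite set `F'`,
which `S` moves into `F`, plays the role of `F ∩ ⋂ s ∈ S, F s⁻¹`; it need not lie in `F`. -/
def HasFolnerSets (G : Type*) [Group G] : Prop :=
  ∀ (S : Finset G) (ε : ℝ), 0 < ε → ∃ F F' : Finset G, F.Nonempty ∧
    (∀ x ∈ F', ∀ s ∈ S, x * s ∈ F) ∧ (1 - ε) * #F ≤ #F'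

variable {N : ℕ} [NeZero N]

theorem exists_one_sub_mul_sq_le {ε : ℝ} (hε : 0 < ε) :
    ∃ q : ℕ, 1 ≤ q ∧ (1 - ε) * q ^ 2 ≤ ((q : ℝ) - 1) ^ 2 := by
  obtain ⟨q, hq⟩ := exists_nat_gt (2 / ε)
  refine ⟨q, by exact_mod_cast (div_pos two_pos hε).trans hq, ?_⟩
  rw [div_lt_iff₀ hε] at hq
  nlinarith [(Nat.cast_nonneg q : (0 : ℝ) ≤ q)]

theorem exists_box_forall_shear_mem (N κ J : ℕ) [NeZero N] {ε : ℝ} (hε : 0 < ε) :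
    ∃ (F : Finset (ℤ × ℤ)) (F' : Finset (ℤ × ℕ)), F.Nonempty ∧
      (∀ x ∈ F', ∀ k i : ℤ, |k| ≤ κ → |i| ≤ J → (x.1 + k * N ^ x.2, x.2 + i) ∈ F) ∧
      (1 - ε) * #F ≤ #F' := by
  obtain ⟨q, hq0, hq⟩ := exists_one_sub_mul_sq_le hε
  set L := 2 * (J + 1) * q
  set c := (κ + 1) * N ^ L
  have hc : 0 < c := Nat.mul_pos κ.succ_pos (pow_pos (NeZero.pos N) _)
  have hshear (k : ℤ) (n : ℕ) (hk : |k| ≤ κ) (hn : n ≤ L) : |k * (N : ℤ) ^ n| ≤ c := by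
    rw [abs_mul, abs_of_nonneg (by positivity : (0 : ℤ) ≤ (N : ℤ) ^ n)]
    push_cast [c]
    have hN : (1 : ℤ) ≤ N := by exact_mod_cast NeZero.one_le
    gcongr
    linarith
  have hr (m : ℕ) : ((2 * m * q : ℕ) - m - m : ℤ) = (2 * m * (q - 1) : ℕ) := by
    push_cast [Nat.cast_sub hq0]
    ring
  refine ⟨Ico (0 : ℤ) (2 * c * q : ℕ) ×ˢ Ico (0 : ℤ) L,
    Ico (c : ℤ) ((2 * c * q : ℕ) - c) ×ˢ Ico (J + 1) (L - (J + 1)), ?_, ?_, ?_⟩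
  · refine ⟨0, ?_⟩
    simp only [mem_product, mem_Ico, Prod.fst_zero, Prod.snd_zero, le_refl, true_and]
    constructor <;> positivity
  · rintro ⟨a, n⟩ hx k i hk hi
    simp only [mem_product, mem_Ico] at hx ⊢
    have h1 := abs_le.mp (hshear k n hk (by omega))
    have h2 := abs_le.mp hi
    omega
  · have h3 : L - (J + 1) - (J + 1) = 2 * (J + 1) * (q - 1) := by
      have := hr (J + 1)
      omega
    rw [card_product, card_product, Int.card_Ico, Int.card_Ico, Int.card_Ico, Nat.card_Ico,
      hr, h3, sub_zero, sub_zero]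
    simp only [Int.toNat_natCast]
    push_cast [L, Nat.cast_sub hq0]
    calc _ = 4 * (c * (J + 1) : ℝ) * ((1 - ε) * q ^ 2) := by ring
      _ ≤ 4 * (c * (J + 1) : ℝ) * (q - 1) ^ 2 := by gcongr
      _ = _ := by ring

theorem hasFolnerSets_BS : HasFolnerSets (BS N) := by
  classical
  intro S ε hε
  obtain ⟨M, hM⟩ := exists_forall_eq_normalForm S
  choose! k i hki using hM
  obtain ⟨κ, hκ⟩ := (S.image fun g => (k g).natAbs).exists_le
  obtain ⟨J, hJ⟩ := (S.image fun g => (i g - M).natAbs).exists_le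
  obtain ⟨F, F', hF, hFF', hcard⟩ := exists_box_forall_shear_mem N κ J hε
  refine ⟨F.image fun x => normalForm N M x.1 (M + x.2),
    F'.image fun x => normalForm N M x.1 (M + x.2), hF.image _, ?_, ?_⟩
  · simp only [Finset.forall_mem_image]
    intro x hx s hs
    have hmem := hFF' x hx (k s) (i s - M) ?_ ?_
    · rw [hki s hs, normalForm_mul_normalForm]
      exact Finset.mem_image.mpr ⟨_, hmem, by ring_nf⟩
    · rw [Int.abs_eq_natAbs]
      exact_mod_cast hκ _ (Finset.mem_image_of_mem _ hs)
    · rw [Int.abs_eq_natAbs]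
      exact_mod_cast hJ _ (Finset.mem_image_of_mem _ hs)
  · rwa [Finset.card_image_of_injective, Finset.card_image_of_injective]
    · rintro ⟨a, n⟩ ⟨b, m⟩ h
      simpa [normalForm_inj] using h
    · rintro ⟨a, n⟩ ⟨b, m⟩ h
      simpa [normalForm_inj] using h

end FolnerSets

section L2

/-- The Hilbert space `ℓ²(X)`. -/
noncomputable abbrev L2 (X : Type*) := lp (fun _ : X => ℂ) 2

/-- The standard orthonormal basis of `ℓ²(X)`. -/
noncomputable def delta (X : Type*) : HilbertBasis X ℂ (L2 X) := ⟨LinearIsometryEquiv.refl ℂ _⟩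

variable {X : Type*}

theorem inner_delta (x : X) (f : L2 X) : ⟪delta X x, f⟫_ℂ = f x :=
  ((delta X).repr_apply_apply f x).symm

theorem delta_apply [DecidableEq X] (x y : X) : delta X x y = if y = x then 1 else 0 := by
  rw [← inner_delta, orthonormal_iff_ite.mp (delta X).orthonormal]

theorem norm_delta (x : X) : ‖delta X x‖ = 1 := (delta X).orthonormal.1 x

theorem dense_span_delta : Dense (Submodule.span ℂ (Set.range (delta X)) : Set (L2 X)) :=
  Submodule.dense_iff_topologicalClosure_eq_top.mpr (delta X).dense_span

end L2

section WeakContainment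

variable {G : Type*} [Group G]
  {H K : Type*} [NormedAddCommGroup H] [InnerProductSpace ℂ H] [CompleteSpace H]
  [NormedAddCommGroup K] [InnerProductSpace ℂ K] [CompleteSpace K]

theorem groupEval_apply (π : G →* unitary (H →L[ℂ] H)) (a : G →₀ ℂ) (v : H) :
    groupEval π a v = ∑ g ∈ a.support, a g • (π g : H →L[ℂ] H) v := by
  rw [groupEval, Finsupp.linearCombination_apply, Finsupp.sum, sum_apply]
  rfl

theorem groupEval_apply_groupEval_apply (π : G →* unitary (H →L[ℂ] H)) (a b : G →₀ ℂ) (v : H) :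
    groupEval π a (groupEval π b v) = ∑ p ∈ a.support ×ˢ b.support,
      (a p.1 * b p.2) • (π (p.1 * p.2) : H →L[ℂ] H) v := by
  rw [groupEval_apply, Finset.sum_product]
  simp only [groupEval_apply, map_sum, map_smul, Finset.smul_sum, mul_smul, map_mul,
    Submonoid.coe_mul, mul_apply_eq_comp]

theorem inner_unitary_apply_unitary_apply (U V : unitary (H →L[ℂ] H)) (v w : H) :
    ⟪(U : H →L[ℂ] H) v, (V : H →L[ℂ] H) w⟫_ℂ = ⟪v, ((U⁻¹ * V : unitary _) : H →L[ℂ] H) w⟫_ℂ := by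
  rw [Submonoid.coe_mul, ← Unitary.star_eq_inv, Unitary.coe_star,
    ContinuousLinearMap.star_eq_adjoint, mul_apply_eq_comp,
    ContinuousLinearMap.adjoint_inner_right]

theorem norm_sum_smul_apply_congr {π : G →* unitary (H →L[ℂ] H)} {σ : G →* unitary (K →L[ℂ] K)}
    {v : H} {w : K} {ι : Type*} (s : Finset ι) (c : ι → ℂ) (γ : ι → G)
    (h : ∀ i ∈ s, ∀ j ∈ s, ⟪v, (π ((γ i)⁻¹ * γ j) : H →L[ℂ] H) v⟫_ℂ =
      ⟪w, (σ ((γ i)⁻¹ * γ j) : K →L[ℂ] K) w⟫_ℂ) :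
    ‖∑ i ∈ s, c i • (π (γ i) : H →L[ℂ] H) v‖ = ‖∑ i ∈ s, c i • (σ (γ i) : K →L[ℂ] K) w‖ := by
  have hinner : ⟪∑ i ∈ s, c i • (π (γ i) : H →L[ℂ] H) v, ∑ i ∈ s, c i • (π (γ i) : H →L[ℂ] H) v⟫_ℂ =
      ⟪∑ i ∈ s, c i • (σ (γ i) : K →L[ℂ] K) w, ∑ i ∈ s, c i • (σ (γ i) : K →L[ℂ] K) w⟫_ℂ := by
    simp only [sum_inner, inner_sum, inner_smul_left, inner_smul_right,
      inner_unitary_apply_unitary_apply, ← map_inv, ← map_mul]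
    exact Finset.sum_congr rfl fun j hj => congrArg _ <|
      Finset.sum_congr rfl fun i hi => by rw [h i hi j hj]
  rw [@norm_eq_sqrt_re_inner ℂ, @norm_eq_sqrt_re_inner ℂ, hinner]

theorem WeaklyContained.of_inner_eq {π : G →* unitary (H →L[ℂ] H)} {σ : G →* unitary (K →L[ℂ] K)}
    {w : K} (hw : DenseRange fun b => groupEval σ b w)
    (h : ∀ S : Finset G, ∃ v : H, ∀ g ∈ S,
      ⟪v, (π g : H →L[ℂ] H) v⟫_ℂ = ⟪w, (σ g : K →L[ℂ] K) w⟫_ℂ) :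
    WeaklyContained σ π := by
  classical
  refine fun a => ContinuousLinearMap.opNorm_le_bound _ (norm_nonneg _) fun x =>
    hw.induction_on x (isClosed_le (by fun_prop) (by fun_prop)) fun b => ?_
  set s := a.support ×ˢ b.support
  obtain ⟨v, hv⟩ := h ((b.support ×ˢ b.support).image (fun p => p.1⁻¹ * p.2) ∪
    (s ×ˢ s).image (fun p => (p.1.1 * p.1.2)⁻¹ * (p.2.1 * p.2.2)))
  have hb : ‖groupEval π b v‖ = ‖groupEval σ b w‖ := by
    rw [groupEval_apply, groupEval_apply]
    exact norm_sum_smul_apply_congr _ b id fun i hi j hj => hv _ <| Finset.mem_union_left _ <|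
      Finset.mem_image.mpr ⟨(i, j), Finset.mk_mem_product hi hj, rfl⟩
  have hab : ‖groupEval π a (groupEval π b v)‖ = ‖groupEval σ a (groupEval σ b w)‖ := by
    rw [groupEval_apply_groupEval_apply, groupEval_apply_groupEval_apply]
    exact norm_sum_smul_apply_congr s _ (fun p => p.1 * p.2) fun i hi j hj =>
      hv _ <| Finset.mem_union_right _ <|
        Finset.mem_image.mpr ⟨(i, j), Finset.mk_mem_product hi hj, rfl⟩
  rw [← hab, ← hb]
  exact (groupEval π a).le_opNorm _

/-- `ρ` is the right regular representation of `G`: `ρ g f = fun x ↦ f (x * g)`. -/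
def IsRightRegular (ρ : G →* unitary (L2 G →L[ℂ] L2 G)) : Prop :=
  ∀ (g : G) (f : L2 G) (x : G), (ρ g : L2 G →L[ℂ] L2 G) f x = f (x * g)

namespace IsRightRegular

variable {ρ : G →* unitary (L2 G →L[ℂ] L2 G)}

theorem apply_delta (hρ : IsRightRegular ρ) (g x : G) :
    (ρ g : L2 G →L[ℂ] L2 G) (delta G x) = delta G (x * g⁻¹) := by
  classical
  ext y
  simp only [hρ g, delta_apply, eq_mul_inv_iff_mul_eq]

theorem groupEval_apply_apply (hρ : IsRightRegular ρ) (a : G →₀ ℂ) (f : L2 G) (x : G) :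
    groupEval ρ a f x = ∑ g ∈ a.support, a g * f (x * g) := by
  simp only [groupEval_apply, lp.coeFn_sum, Finset.sum_apply, lp.coeFn_smul, Pi.smul_apply, hρ _,
    smul_eq_mul]

theorem inner_delta_one (hρ : IsRightRegular ρ) (g : G) [Decidable (g = 1)] :
    ⟪delta G 1, (ρ g : L2 G →L[ℂ] L2 G) (delta G 1)⟫_ℂ = if g = 1 then 1 else 0 := by
  classical
  rw [inner_delta, hρ, delta_apply, one_mul]
  congr

theorem inner_delta_one_groupEval (hρ : IsRightRegular ρ) (a : G →₀ ℂ) :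
    ⟪delta G 1, groupEval ρ a (delta G 1)⟫_ℂ = a 1 := by
  classical
  simp +contextual [groupEval_apply, hρ.inner_delta_one]

theorem denseRange_groupEval_delta_one (hρ : IsRightRegular ρ) :
    DenseRange fun b => groupEval ρ b (delta G 1) := by
  have hspan : Submodule.span ℂ (Set.range (delta G)) ≤ LinearMap.range
      ((ContinuousLinearMap.apply ℂ (L2 G) (delta G 1)).toLinearMap ∘ₗ groupEval ρ) := by
    rw [Submodule.span_le]
    rintro _ ⟨x, rfl⟩
    exact ⟨.single x⁻¹ 1, by simp [groupEval_single, hρ.apply_delta, -map_inv]⟩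
  exact dense_span_delta.mono hspan

theorem sum_norm_sq_le (hρ : IsRightRegular ρ) (a : G →₀ ℂ) {F : Finset G} {f : G → ℂ}
    (hf : ∀ x ∉ F, f x = 0) (F' : Finset G) :
    ∑ x ∈ F', ‖∑ g ∈ a.support, a g * f (x * g)‖ ^ 2 ≤
      ‖groupEval ρ a‖ ^ 2 * ∑ x ∈ F, ‖f x‖ ^ 2 := by
  classical
  set φ : L2 G := ∑ x ∈ F, lp.single 2 x (f x)
  have hφ : ⇑φ = f := by
    ext x
    simp only [φ, lp.coeFn_sum, lp.coeFn_single, Finset.sum_apply, Finset.sum_pi_single]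
    exact ite_eq_left_iff.mpr fun hx => (hf x hx).symm
  have hnorm : ‖φ‖ ^ 2 = ∑ x ∈ F, ‖f x‖ ^ 2 := by
    simpa using lp.norm_sum_single (p := 2) (by simp) f F
  calc ∑ x ∈ F', ‖∑ g ∈ a.support, a g * f (x * g)‖ ^ 2
      = ∑ x ∈ F', ‖groupEval ρ a φ x‖ ^ 2 := by simp only [hρ.groupEval_apply_apply, hφ]
    _ ≤ ‖groupEval ρ a φ‖ ^ 2 := by
        simpa using lp.sum_rpow_le_norm_rpow (p := 2) (by simp) (groupEval ρ a φ) F'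
    _ ≤ (‖groupEval ρ a‖ * ‖φ‖) ^ 2 :=
        pow_le_pow_left₀ (norm_nonneg _) ((groupEval ρ a).le_opNorm φ) 2
    _ = ‖groupEval ρ a‖ ^ 2 * ∑ x ∈ F, ‖f x‖ ^ 2 := by rw [mul_pow, hnorm]

theorem sum_norm_sq_le_of_finiteDimensional (hρ : IsRightRegular ρ) {E : Type*}
    [NormedAddCommGroup E] [InnerProductSpace ℂ E] [FiniteDimensional ℂ E] (a : G →₀ ℂ)
    {F : Finset G} {f : G → E} (hf : ∀ x ∉ F, f x = 0) (F' : Finset G) :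
    ∑ x ∈ F', ‖∑ g ∈ a.support, a g • f (x * g)‖ ^ 2 ≤
      ‖groupEval ρ a‖ ^ 2 * ∑ x ∈ F, ‖f x‖ ^ 2 := by
  set e := stdOrthonormalBasis ℂ E
  simp only [← e.sum_sq_norm_inner_right, inner_sum, inner_smul_right]
  rw [Finset.sum_comm, Finset.sum_comm (s := F), Finset.mul_sum]
  refine Finset.sum_le_sum fun i _ => ?_
  exact hρ.sum_norm_sq_le a (f := fun x => ⟪e i, f x⟫_ℂ) (fun x hx => by simp [hf x hx]) F'

theorem card_mul_norm_sq_le (hρ : IsRightRegular ρ) (π : G →* unitary (H →L[ℂ] H)) (a : G →₀ ℂ)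
    {F F' : Finset G} (hF : ∀ x ∈ F', ∀ g ∈ a.support, x * g ∈ F) (v : H) :
    F'.card * ‖groupEval π a v‖ ^ 2 ≤ ‖groupEval ρ a‖ ^ 2 * (F.card * ‖v‖ ^ 2) := by
  classical
  set E : Submodule ℂ H := Submodule.span ℂ (F.image fun x => (π x : H →L[ℂ] H) v)
  set f : G → E := fun x => if hx : x ∈ F then
    ⟨(π x : H →L[ℂ] H) v, Submodule.subset_span (Finset.mem_image_of_mem _ hx)⟩ else 0
  have hf {x : G} (hx : x ∈ F) : (f x : H) = (π x : H →L[ℂ] H) v := by simp only [f, hx, dif_pos]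
  have hsum (x : G) (hx : x ∈ F') :
      ‖∑ g ∈ a.support, a g • f (x * g)‖ ^ 2 = ‖groupEval π a v‖ ^ 2 := by
    rw [← Unitary.norm_map (π x) (groupEval π a v), groupEval_apply, map_sum, ← Submodule.norm_coe,
      Submodule.coe_sum]
    congr 2
    refine Finset.sum_congr rfl fun g hg => ?_
    rw [Submodule.coe_smul, hf (hF x hx g hg), map_mul, map_smul]
    rfl
  have hnorm (x : G) (hx : x ∈ F) : ‖f x‖ ^ 2 = ‖v‖ ^ 2 := by
    rw [← Submodule.norm_coe, hf hx, Unitary.norm_map]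
  have h := hρ.sum_norm_sq_le_of_finiteDimensional a (f := f) (fun x hx => dif_neg hx) F'
  simpa only [Finset.sum_congr rfl hsum, Finset.sum_congr rfl hnorm, Finset.sum_const,
    nsmul_eq_mul] using h

end IsRightRegular

theorem HasFolnerSets.weaklyContained (hG : HasFolnerSets G)
    {ρ : G →* unitary (L2 G →L[ℂ] L2 G)} (hρ : IsRightRegular ρ) (π : G →* unitary (H →L[ℂ] H)) :
    WeaklyContained π ρ := by
  refine fun a => ContinuousLinearMap.opNorm_le_bound _ (norm_nonneg _) fun v => ?_
  refine le_of_sq_le_sq ?_ (by positivity)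
  have hε (ε : ℝ) (hε : 0 < ε) :
      (1 - ε) * ‖groupEval π a v‖ ^ 2 ≤ (‖groupEval ρ a‖ * ‖v‖) ^ 2 := by
    obtain ⟨F, F', hne, hF, hcard⟩ := hG a.support ε hε
    have hpos : (0 : ℝ) < F.card := by exact_mod_cast hne.card_pos
    refine le_of_mul_le_mul_left ?_ hpos
    calc F.card * ((1 - ε) * ‖groupEval π a v‖ ^ 2)
        = (1 - ε) * F.card * ‖groupEval π a v‖ ^ 2 := by ring
      _ ≤ F'.card * ‖groupEval π a v‖ ^ 2 := by gcongr
      _ ≤ ‖groupEval ρ a‖ ^ 2 * (F.card * ‖v‖ ^ 2) := hρ.card_mul_norm_sq_le π a hF v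
      _ = F.card * (‖groupEval ρ a‖ * ‖v‖) ^ 2 := by ring
  have hlim : Filter.Tendsto (fun ε : ℝ => (1 - ε) * ‖groupEval π a v‖ ^ 2)
      (nhdsWithin 0 (Set.Ioi 0)) (nhds (‖groupEval π a v‖ ^ 2)) := by
    have : Continuous fun ε : ℝ => (1 - ε) * ‖groupEval π a v‖ ^ 2 := by fun_prop
    simpa using (this.tendsto 0).mono_left nhdsWithin_le_nhds
  exact le_of_tendsto hlim (eventually_mem_nhdsWithin.mono hε)

/-- `ψ` is a wavelet vector for `π`: its translates and dilates `π (u ^ j * t ^ k) ψ` are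
orthonormal, but need not span `H`. -/
def IsOrthonormalWavelet {N : ℕ} (π : BS N →* unitary (H →L[ℂ] H)) (ψ : H) : Prop :=
  Orthonormal ℂ fun jk : ℤ × ℤ => (π (BS.u N ^ jk.1 * BS.t N ^ jk.2) : H →L[ℂ] H) ψ

theorem IsOrthonormalWavelet.weaklyContained {N : ℕ} {π : BS N →* unitary (H →L[ℂ] H)} {ψ : H}
    (hψ : IsOrthonormalWavelet π ψ) {ρ : BS N →* unitary (L2 (BS N) →L[ℂ] L2 (BS N))}
    (hρ : IsRightRegular ρ) : WeaklyContained ρ π := by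
  classical
  refine WeaklyContained.of_inner_eq hρ.denseRange_groupEval_delta_one fun S => ?_
  obtain ⟨M, hM⟩ := exists_forall_conj_eq S
  refine ⟨(π (BS.u N ^ M)⁻¹ : H →L[ℂ] H) ψ, fun g hg => ?_⟩
  obtain ⟨j, k, hjk⟩ := hM g hg
  have hψ₀ : (π (BS.u N ^ (0 : ℤ) * BS.t N ^ (0 : ℤ)) : H →L[ℂ] H) ψ = ψ := by simp
  have hconj : ⟪(π (BS.u N ^ M)⁻¹ : H →L[ℂ] H) ψ,
      (π g : H →L[ℂ] H) ((π (BS.u N ^ M)⁻¹ : H →L[ℂ] H) ψ)⟫_ℂ =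
      ⟪ψ, (π (BS.u N ^ j * BS.t N ^ k) : H →L[ℂ] H) ψ⟫_ℂ := by
    rw [← mul_apply_eq_comp, ← Submonoid.coe_mul, inner_unitary_apply_unitary_apply, ← hjk,
      ← map_inv, ← map_mul, ← map_mul, inv_inv, mul_assoc]
  have hone : (j, k) = (0, 0) ↔ g = 1 := by
    constructor
    · rintro ⟨⟩
      simpa using hjk
    · rintro rfl
      exact hψ.linearIndependent.injective (by simp [← hjk])
  rw [hρ.inner_delta_one, hconj, ← hψ₀]
  simpa [eq_comm, hone] using orthonormal_iff_ite.mp hψ (0, 0) (j, k)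

end WeakContainment

section Monomial

variable {X : Type*} {C : ℝ}

theorem memℓp_two_of_norm_le (f : L2 X) {h : X → ℂ} (σ : Equiv.Perm X)
    (hle : ∀ n, ‖h n‖ ≤ C * ‖f (σ n)‖) : Memℓp h 2 := by
  have hf : Summable fun n => (C * ‖f (σ n)‖) ^ 2 := by
    have := (lp.memℓp f).summable (by simp)
    simp only [ENNReal.toReal_ofNat, Real.rpow_ofNat] at this
    simp only [mul_pow]
    exact (σ.summable_iff.mpr this).mul_left (C ^ 2)
  refine memℓp_gen (hf.of_nonneg_of_le (fun n => by positivity) fun n => ?_)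
  simpa using pow_le_pow_left₀ (norm_nonneg _) (hle n) 2

theorem norm_le_mul_norm_of_norm_le {f h : L2 X} (σ : Equiv.Perm X) (hC : 0 ≤ C)
    (hle : ∀ n, ‖h n‖ ≤ C * ‖f (σ n)‖) : ‖h‖ ≤ C * ‖f‖ := by
  have hsum (k : L2 X) : HasSum (fun n => ‖k n‖ ^ 2) (‖k‖ ^ 2) := by
    simpa using lp.hasSum_norm (p := 2) (by simp) k
  refine le_of_sq_le_sq ?_ (by positivity)
  rw [mul_pow]
  refine hasSum_le (fun n => ?_) (hsum h) ((σ.hasSum_iff.mpr (hsum f)).mul_left (C ^ 2))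
  rw [Function.comp_apply, ← mul_pow]
  exact pow_le_pow_left₀ (norm_nonneg _) (hle n) 2

theorem norm_circle_mul (z : Circle) (c : ℂ) : ‖z * c‖ = ‖c‖ := by
  rw [norm_mul, Circle.norm_coe, one_mul]

theorem norm_eq_norm_of_norm_eq {f h : L2 X} (σ : Equiv.Perm X)
    (heq : ∀ n, ‖h n‖ = ‖f (σ n)‖) : ‖h‖ = ‖f‖ := by
  refine le_antisymm ?_ ?_
  · simpa using norm_le_mul_norm_of_norm_le σ zero_le_one fun n => (heq n).trans_le (one_mul _).ge
  · simpa using norm_le_mul_norm_of_norm_le (f := h) (h := f) σ.symm zero_le_one fun n => by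
      rw [one_mul, heq, σ.apply_symm_apply]

/-- The isometry `f ↦ m • (f ∘ σ)` of `ℓ²(X)`, for a permutation `σ` and unimodular weights `m`. -/
noncomputable def monomialIsometry (m : X → Circle) (σ : Equiv.Perm X) : L2 X →ₗᵢ[ℂ] L2 X where
  toFun f := ⟨fun n => m n * f (σ n), memℓp_two_of_norm_le (C := 1) f σ fun n => by
    rw [norm_circle_mul, one_mul]⟩
  map_add' f g := by ext n; exact mul_add ..
  map_smul' c f := by ext n; exact mul_left_comm ..
  norm_map' f := norm_eq_norm_of_norm_eq σ fun n => norm_circle_mul (m n) (f (σ n))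

/-- The unitary operator `f ↦ m • (f ∘ σ)` of `ℓ²(X)`. -/
noncomputable def monomialUnitary (m : X → Circle) (σ : Equiv.Perm X) :
    unitary (L2 X →L[ℂ] L2 X) :=
  Unitary.linearIsometryEquiv.symm <| LinearIsometryEquiv.ofSurjective (monomialIsometry m σ)
    fun f => ⟨monomialIsometry (fun n => (m (σ.symm n))⁻¹) σ.symm f, by
      ext n
      change (m n : ℂ) * (((m (σ.symm (σ n)))⁻¹ : Circle) * f (σ.symm (σ n))) = f n
      simp⟩

theorem monomialUnitary_apply (m : X → Circle) (σ : Equiv.Perm X) (f : L2 X) (n : X) :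
    (monomialUnitary m σ : L2 X →L[ℂ] L2 X) f n = m n * f (σ n) := rfl

end Monomial

section WeightedShift

variable {N : ℕ} [NeZero N]

/-- The representation of `BS(1,N)` on `ℓ²(ℤ)` induced from the character `e(x ·)` of the
translation subgroup `ℤ[1/N]`. -/
noncomputable def weightedShift (x : ℝ) : BS N →* unitary (L2 ℤ →L[ℂ] L2 ℤ) where
  toFun g := monomialUnitary (fun n => 𝐞 (N ^ n * translation g * x)) (Equiv.addRight (height g))
  map_one' := by
    ext f n
    simp [monomialUnitary_apply, height, translation]
  map_mul' g h := by
    ext f n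
    have hexp : (N : ℝ) ^ n * translation (g * h) * x =
        N ^ n * translation g * x + N ^ (n + height g) * translation h * x := by
      rw [translation_mul, zpow_add₀ (NeZero.ne (N : ℝ))]
      ring
    change (𝐞 _ : ℂ) * f (n + height (g * h)) =
      𝐞 _ * (𝐞 (N ^ (n + height g) * translation h * x) * f (n + height g + height h))
    rw [hexp, AddChar.map_add_eq_mul, Circle.coe_mul, mul_assoc, height_mul, add_assoc]

theorem weightedShift_apply (x : ℝ) (g : BS N) (f : L2 ℤ) (n : ℤ) :
    (weightedShift x g : L2 ℤ →L[ℂ] L2 ℤ) f n =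
      𝐞 (N ^ n * translation g * x) * f (n + height g) := rfl

end WeightedShift

section Adic

/-- The subring `ℤ[1/N]` of `ℝ`. -/
def adicSubring (N : ℕ) : Subring ℝ where
  carrier := {z | ∃ (M : ℕ) (k : ℤ), z * N ^ M = k}
  zero_mem' := ⟨0, 0, by simp⟩
  one_mem' := ⟨0, 1, by simp⟩
  neg_mem' := by
    rintro _ ⟨M, k, h⟩
    exact ⟨M, -k, by rw [neg_mul, h, Int.cast_neg]⟩
  add_mem' := by
    rintro x y ⟨M, k, hx⟩ ⟨L, l, hy⟩
    refine ⟨M + L, k * N ^ L + l * N ^ M, ?_⟩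
    push_cast
    rw [← hx, ← hy]
    ring
  mul_mem' := by
    rintro x y ⟨M, k, hx⟩ ⟨L, l, hy⟩
    refine ⟨M + L, k * l, ?_⟩
    push_cast
    rw [← hx, ← hy]
    ring

variable {N : ℕ}

theorem inv_pow_mem_adicSubring [NeZero N] (J : ℕ) : ((N : ℝ) ^ J)⁻¹ ∈ adicSubring N :=
  ⟨J, 1, by rw [inv_mul_cancel₀ (pow_ne_zero J (NeZero.ne (N : ℝ))), Int.cast_one]⟩

theorem translation_mem_adicSubring [NeZero N] (g : BS N) : translation g ∈ adicSubring N := by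
  obtain ⟨M, hM⟩ := exists_forall_translation_mul_pow_eq {g}
  exact ⟨M, hM g (Finset.mem_singleton_self g)⟩

theorem fourierChar_intCast (k : ℤ) : 𝐞 (k : ℝ) = 1 := by
  ext
  rw [Real.fourierChar_apply, Circle.coe_one, Complex.exp_eq_one_iff]
  exact ⟨k, by push_cast; ring⟩

theorem norm_fourierChar_sub_one_le (x : ℝ) : ‖(𝐞 x : ℂ) - 1‖ ≤ 2 * Real.pi * |x| := by
  rw [Real.fourierChar_apply, mul_comm _ Complex.I]
  refine Real.norm_exp_I_mul_ofReal_sub_one_le.trans_eq ?_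
  rw [Real.norm_eq_abs, abs_mul, abs_of_pos Real.two_pi_pos]

theorem norm_fourierChar_sub_one_le_two (x : ℝ) : ‖(𝐞 x : ℂ) - 1‖ ≤ 2 := by
  refine (norm_sub_le _ _).trans ?_
  rw [Circle.norm_coe, norm_one]
  norm_num

theorem eventually_fourierChar_zpow_mul_eq_one [NeZero N] {z : ℝ} (hz : z ∈ adicSubring N) :
    ∀ᶠ n : ℤ in Filter.atTop, 𝐞 (N ^ n * z) = 1 := by
  obtain ⟨M, k, hk⟩ := hz
  filter_upwards [Filter.eventually_ge_atTop (M : ℤ)] with n hn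
  obtain ⟨i, rfl⟩ := Int.le.dest hn
  have : (N : ℝ) ^ ((M : ℤ) + i) * z = ((k * N ^ i : ℤ) : ℝ) := by
    rw [zpow_add₀ (NeZero.ne (N : ℝ)), zpow_natCast, zpow_natCast]
    push_cast
    rw [← hk]
    ring
  rw [this, fourierChar_intCast]

theorem tendsto_fourierChar_zpow_mul (hN : 2 ≤ N) {z : ℝ} (hz : z ∈ adicSubring N) :
    Filter.Tendsto (fun n : ℤ => (𝐞 (N ^ n * z) : ℂ)) Filter.cofinite (𝓝 1) := by
  have : NeZero N := ⟨by lia⟩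
  rw [Int.cofinite_eq, Filter.tendsto_sup]
  constructor
  · have hpow : Filter.Tendsto (fun n : ℤ => (N : ℝ) ^ n * z) Filter.atBot (𝓝 0) := by
      have := ((tendsto_rpow_atBot_of_base_gt_one (N : ℝ) (by exact_mod_cast hN)).comp
        (tendsto_intCast_atBot_iff.mpr Filter.tendsto_id)).mul_const z
      simpa only [Function.comp_def, Real.rpow_intCast, zero_mul, id] using this
    have := (Real.differentiable_fourierChar.continuous.tendsto 0).comp hpow
    simp only [AddChar.map_zero_eq_one, Circle.coe_one] at this
    exact this
  · refine tendsto_const_nhds.congr' <|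
      (eventually_fourierChar_zpow_mul_eq_one hz).mono fun n hn => ?_
    simp only [hn, Circle.coe_one]

end Adic

section Tight

variable {H ι : Type*} [NormedAddCommGroup H] [InnerProductSpace ℂ H]

/-- The operators `T i` are uniformly small on the orthogonal complement of a large finite set. -/
def UniformlyTight (T : ι → H →L[ℂ] H) : Prop :=
  ∀ δ > 0, ∃ s : Finset H, ∀ i f, (∀ e ∈ s, ⟪e, f⟫_ℂ = 0) → ‖T i f‖ ≤ δ * ‖f‖

namespace UniformlyTight

variable {S T : ι → H →L[ℂ] H}

theorem add (hS : UniformlyTight S) (hT : UniformlyTight T) : UniformlyTight (S + T) := by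
  classical
  intro δ hδ
  obtain ⟨s, hs⟩ := hS (δ / 2) (half_pos hδ)
  obtain ⟨s', hs'⟩ := hT (δ / 2) (half_pos hδ)
  refine ⟨s ∪ s', fun i f hf => ?_⟩
  calc ‖S i f + T i f‖ ≤ ‖S i f‖ + ‖T i f‖ := norm_add_le _ _
    _ ≤ δ / 2 * ‖f‖ + δ / 2 * ‖f‖ :=
        add_le_add (hs i f fun e he => hf e (Finset.mem_union_left _ he))
          (hs' i f fun e he => hf e (Finset.mem_union_right _ he))
    _ = δ * ‖f‖ := by ring

theorem const_smul (c : ℂ) (hT : UniformlyTight T) : UniformlyTight (c • T) := by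
  intro δ hδ
  obtain ⟨s, hs⟩ := hT (δ / (‖c‖ + 1)) (by positivity)
  refine ⟨s, fun i f hf => ?_⟩
  calc ‖c • T i f‖ = ‖c‖ * ‖T i f‖ := norm_smul _ _
    _ ≤ (‖c‖ + 1) * (δ / (‖c‖ + 1) * ‖f‖) := by
        gcongr
        · exact le_add_of_nonneg_right zero_le_one
        · exact hs i f hf
    _ = δ * ‖f‖ := by field_simp

theorem of_forall_exists_norm_sub_le
    (h : ∀ ε > 0, ∃ S : ι → H →L[ℂ] H, UniformlyTight S ∧ ∀ i, ‖T i - S i‖ ≤ ε) :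
    UniformlyTight T := by
  intro δ hδ
  obtain ⟨S, hS, hTS⟩ := h (δ / 2) (half_pos hδ)
  obtain ⟨s, hs⟩ := hS (δ / 2) (half_pos hδ)
  refine ⟨s, fun i f hf => ?_⟩
  calc ‖T i f‖ = ‖(T i - S i) f + S i f‖ := by rw [sub_apply, sub_add_cancel]
    _ ≤ ‖(T i - S i) f‖ + ‖S i f‖ := norm_add_le _ _
    _ ≤ δ / 2 * ‖f‖ + δ / 2 * ‖f‖ :=
        add_le_add ((T i - S i).le_of_opNorm_le (hTS i) f) (hs i f hf)
    _ = δ * ‖f‖ := by ring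

end UniformlyTight

end Tight

section Fiber

variable {N : ℕ} [NeZero N]

theorem norm_weightedShift_sub_apply (g : BS N) (x y : ℝ) (f : L2 ℤ) (n : ℤ) :
    ‖((weightedShift (x + y) g : L2 ℤ →L[ℂ] L2 ℤ) -
      (weightedShift x g : L2 ℤ →L[ℂ] L2 ℤ)) f n‖ =
      ‖(𝐞 (N ^ n * (translation g * y)) : ℂ) - 1‖ * ‖f (n + height g)‖ := by
  have hsub : ((weightedShift (x + y) g : L2 ℤ →L[ℂ] L2 ℤ) -
      (weightedShift x g : L2 ℤ →L[ℂ] L2 ℤ)) f n = 𝐞 (N ^ n * translation g * x) *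
        ((𝐞 (N ^ n * (translation g * y)) - 1) * f (n + height g)) := by
    rw [sub_apply, lp.coeFn_sub, Pi.sub_apply, weightedShift_apply, weightedShift_apply, mul_add,
      AddChar.map_add_eq_mul, Circle.coe_mul, ← mul_assoc _ _ y]
    ring
  rw [hsub, norm_circle_mul, norm_mul]

theorem uniformlyTight_weightedShift_sub (hN : 2 ≤ N) {y : ℝ} (hy : y ∈ adicSubring N)
    (g : BS N) :
    UniformlyTight fun x : ℝ =>
      (weightedShift (x + y) g : L2 ℤ →L[ℂ] L2 ℤ) - (weightedShift x g : L2 ℤ →L[ℂ] L2 ℤ) := by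
  intro δ hδ
  have hlim := tendsto_fourierChar_zpow_mul hN (mul_mem (translation_mem_adicSubring g) hy)
  have hfin : {n : ℤ | δ < ‖(𝐞 (N ^ n * (translation g * y)) : ℂ) - 1‖}.Finite := by
    have := Filter.eventually_cofinite.mp
      ((tendsto_iff_norm_sub_tendsto_zero.mp hlim).eventually_le_const hδ)
    simpa only [not_le] using this
  classical
  refine ⟨hfin.toFinset.image fun n => delta ℤ (n + height g), fun x f hf => ?_⟩
  refine norm_le_mul_norm_of_norm_le (Equiv.addRight (height g)) hδ.le fun n => ?_
  rw [norm_weightedShift_sub_apply, Equiv.coe_addRight]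
  by_cases hn : ‖(𝐞 (N ^ n * (translation g * y)) : ℂ) - 1‖ ≤ δ
  · gcongr
  · have hn' := Finset.mem_image_of_mem (fun n => delta ℤ (n + height g))
      (hfin.mem_toFinset.mpr (not_le.mp hn))
    rw [← inner_delta, hf _ hn', norm_zero, mul_zero, mul_zero]

theorem norm_weightedShift_sub_sub_apply (g : BS N) (x x' y : ℝ) (f : L2 ℤ) (n : ℤ) :
    ‖(((weightedShift (x + y) g : L2 ℤ →L[ℂ] L2 ℤ) - (weightedShift x g : L2 ℤ →L[ℂ] L2 ℤ)) -
      ((weightedShift (x' + y) g : L2 ℤ →L[ℂ] L2 ℤ) -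
        (weightedShift x' g : L2 ℤ →L[ℂ] L2 ℤ))) f n‖ =
      ‖(𝐞 (N ^ n * (translation g * (x - x'))) : ℂ) - 1‖ *
        ‖(𝐞 (N ^ n * (translation g * y)) : ℂ) - 1‖ * ‖f (n + height g)‖ := by
  have hx : x = x' + (x - x') := by ring
  set h := x - x'
  have hsub : (((weightedShift (x + y) g : L2 ℤ →L[ℂ] L2 ℤ) -
      (weightedShift x g : L2 ℤ →L[ℂ] L2 ℤ)) - ((weightedShift (x' + y) g : L2 ℤ →L[ℂ] L2 ℤ) -
        (weightedShift x' g : L2 ℤ →L[ℂ] L2 ℤ))) f n = 𝐞 (N ^ n * translation g * x') *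
        ((𝐞 (N ^ n * (translation g * h)) - 1) * (𝐞 (N ^ n * (translation g * y)) - 1) *
          f (n + height g)) := by
    simp only [hx, sub_apply, lp.coeFn_sub, Pi.sub_apply, weightedShift_apply, mul_add,
      AddChar.map_add_eq_mul, Circle.coe_mul, ← mul_assoc]
    ring
  rw [hsub, norm_circle_mul, norm_mul, norm_mul]

theorem continuous_weightedShift_sub {y : ℝ} (hy : y ∈ adicSubring N) (g : BS N) :
    Continuous fun x : ℝ =>
      (weightedShift (x + y) g : L2 ℤ →L[ℂ] L2 ℤ) - (weightedShift x g : L2 ℤ →L[ℂ] L2 ℤ) := by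
  obtain ⟨n₀, hn₀⟩ := Filter.eventually_atTop.mp
    (eventually_fourierChar_zpow_mul_eq_one (mul_mem (translation_mem_adicSubring g) hy))
  have hN : (1 : ℝ) ≤ N := by exact_mod_cast NeZero.one_le
  have hlip : LipschitzWith (Real.toNNReal (2 * Real.pi * N ^ n₀ * |translation g| * 2))
      fun x : ℝ => (weightedShift (x + y) g : L2 ℤ →L[ℂ] L2 ℤ) -
        (weightedShift x g : L2 ℤ →L[ℂ] L2 ℤ) := by
    refine LipschitzWith.of_dist_le_mul fun x x' => ?_
    rw [dist_eq_norm, Real.dist_eq, Real.coe_toNNReal _ (by positivity)]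
    refine ContinuousLinearMap.opNorm_le_bound _ (by positivity) fun f => ?_
    refine norm_le_mul_norm_of_norm_le (Equiv.addRight (height g)) (by positivity) fun n => ?_
    rw [norm_weightedShift_sub_sub_apply, Equiv.coe_addRight]
    refine mul_le_mul_of_nonneg_right ?_ (norm_nonneg _)
    rcases le_total n₀ n with hn | hn
    · simp only [hn₀ n hn, Circle.coe_one, sub_self, norm_zero, mul_zero]
      positivity
    · calc ‖(𝐞 (N ^ n * (translation g * (x - x'))) : ℂ) - 1‖ *
            ‖(𝐞 (N ^ n * (translation g * y)) : ℂ) - 1‖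
          ≤ 2 * Real.pi * |N ^ n * (translation g * (x - x'))| * 2 :=
            mul_le_mul (norm_fourierChar_sub_one_le _) (norm_fourierChar_sub_one_le_two _)
              (norm_nonneg _) (by positivity)
        _ = 2 * Real.pi * N ^ n * |translation g| * 2 * |x - x'| := by
            rw [abs_mul, abs_mul, abs_of_pos (by positivity : (0 : ℝ) < N ^ n)]
            ring
        _ ≤ 2 * Real.pi * N ^ n₀ * |translation g| * 2 * |x - x'| := by gcongr
  exact hlip.continuous

variable {ρ : BS N →* unitary (L2 (BS N) →L[ℂ] L2 (BS N))} (hρ : IsRightRegular ρ)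

/-- The extension of `weightedShift x` to the reduced C⋆-algebra of `BS(1,N)`. -/
noncomputable def fiber (x : ℝ) : groupCStar ρ →⋆ₐ[ℂ] (L2 ℤ →L[ℂ] L2 ℤ) :=
  (hasFolnerSets_BS.weaklyContained hρ (weightedShift x)).exists_starAlgHom.choose

theorem fiber_of (x : ℝ) (g : BS N) :
    fiber hρ x (groupCStar.of ρ g) = (weightedShift x g : L2 ℤ →L[ℂ] L2 ℤ) :=
  (hasFolnerSets_BS.weaklyContained hρ (weightedShift x)).exists_starAlgHom.choose_spec g

theorem norm_fiber_le (x : ℝ) (a : groupCStar ρ) : ‖fiber hρ x a‖ ≤ ‖a‖ :=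
  NonUnitalStarAlgHom.norm_apply_le _ a

/-- The difference of the fibres of `a` at `x + y` and at `x`. -/
noncomputable def fiberDiff (y : ℝ) (a : groupCStar ρ) (x : ℝ) : L2 ℤ →L[ℂ] L2 ℤ :=
  fiber hρ (x + y) a - fiber hρ x a

theorem fiberDiff_of (y : ℝ) (g : BS N) :
    fiberDiff hρ y (groupCStar.of ρ g) = fun x => (weightedShift (x + y) g : L2 ℤ →L[ℂ] L2 ℤ) -
      (weightedShift x g : L2 ℤ →L[ℂ] L2 ℤ) := by
  ext1 x
  rw [fiberDiff, fiber_of, fiber_of]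

theorem fiberDiff_add (y : ℝ) (a b : groupCStar ρ) :
    fiberDiff hρ y (a + b) = fiberDiff hρ y a + fiberDiff hρ y b := by
  ext1 x
  rw [fiberDiff, map_add, map_add, add_sub_add_comm]
  rfl

theorem fiberDiff_smul (y : ℝ) (c : ℂ) (a : groupCStar ρ) :
    fiberDiff hρ y (c • a) = c • fiberDiff hρ y a := by
  ext1 x
  rw [fiberDiff, map_smul, map_smul, ← smul_sub]
  rfl

theorem norm_fiberDiff_sub_le (y : ℝ) (a b : groupCStar ρ) (x : ℝ) :
    ‖fiberDiff hρ y a x - fiberDiff hρ y b x‖ ≤ 2 * ‖a - b‖ := by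
  rw [fiberDiff, fiberDiff, sub_sub_sub_comm, ← map_sub, ← map_sub, two_mul]
  exact (norm_sub_le _ _).trans (add_le_add (norm_fiber_le hρ _ _) (norm_fiber_le hρ _ _))

theorem exists_norm_fiberDiff_sub_le {y : ℝ} {s : Set (groupCStar ρ)} {a : groupCStar ρ}
    (ha : a ∈ closure s) {ε : ℝ} (hε : 0 < ε) :
    ∃ b ∈ s, ∀ x, ‖fiberDiff hρ y a x - fiberDiff hρ y b x‖ < ε := by
  obtain ⟨b, hb, hab⟩ := Metric.mem_closure_iff.mp ha (ε / 2) (half_pos hε)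
  rw [dist_eq_norm] at hab
  exact ⟨b, hb, fun x => (norm_fiberDiff_sub_le hρ y a b x).trans_lt (by linarith)⟩

theorem uniformlyTight_fiberDiff (hN : 2 ≤ N) {y : ℝ} (hy : y ∈ adicSubring N)
    (a : groupCStar ρ) : UniformlyTight (fiberDiff hρ y a) := by
  induction a using groupCStar.induction with
  | of g => rw [fiberDiff_of]; exact uniformlyTight_weightedShift_sub hN hy g
  | add a b ha hb => rw [fiberDiff_add]; exact ha.add hb
  | smul c a ha => rw [fiberDiff_smul]; exact ha.const_smul c
  | closed =>
    refine isClosed_of_closure_subset fun a ha => ?_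
    refine UniformlyTight.of_forall_exists_norm_sub_le fun ε hε => ?_
    obtain ⟨b, hb, hab⟩ := exists_norm_fiberDiff_sub_le hρ ha hε
    exact ⟨_, hb, fun x => (hab x).le⟩

theorem continuous_fiberDiff {y : ℝ} (hy : y ∈ adicSubring N) (a : groupCStar ρ) :
    Continuous (fiberDiff hρ y a) := by
  induction a using groupCStar.induction with
  | of g => rw [fiberDiff_of]; exact continuous_weightedShift_sub hy g
  | add a b ha hb => rw [fiberDiff_add]; exact ha.add hb
  | smul c a ha => rw [fiberDiff_smul]; exact ha.const_smul c
  | closed =>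
    refine isClosed_of_closure_subset fun a ha => ?_
    refine continuous_of_uniform_approx_of_continuous fun u hu => ?_
    obtain ⟨ε, hε, hεu⟩ := Metric.mem_uniformity_dist.mp hu
    obtain ⟨b, hb, hab⟩ := exists_norm_fiberDiff_sub_le hρ ha hε
    exact ⟨_, hb, fun x => hεu ((dist_eq_norm _ _).trans_lt (hab x))⟩

end Fiber

section CompressionTrace

variable {H : Type*} [NormedAddCommGroup H] [InnerProductSpace ℂ H]

/-- The compression of an operator to a finite-dimensional subspace `E`. -/
noncomputable def compression (E : Submodule ℂ H) [FiniteDimensional ℂ E] :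
    (H →L[ℂ] H) →ₗ[ℂ] (E →ₗ[ℂ] E) where
  toFun A := E.orthogonalProjectionOnto.toLinearMap ∘ₗ A.toLinearMap ∘ₗ E.subtype
  map_add' A B := by ext v; simp
  map_smul' c A := by ext v; simp

/-- The trace of the compression of an operator to a finite-dimensional subspace `E`. -/
noncomputable def compressionTrace (E : Submodule ℂ H) [FiniteDimensional ℂ E] :
    (H →L[ℂ] H) →ₗ[ℂ] ℂ :=
  LinearMap.trace ℂ E ∘ₗ compression E

variable {A B : H →L[ℂ] H} {E F : Submodule ℂ H} [FiniteDimensional ℂ E] [FiniteDimensional ℂ F]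

theorem compression_apply_of_mem {v : E} (hv : A v ∈ E) : compression E A v = ⟨A v, hv⟩ :=
  Submodule.orthogonalProjectionOnto_mem_subspace_eq_self (⟨A v, hv⟩ : E)

theorem compression_mul (hB : ∀ v ∈ E, B v ∈ E) :
    compression E (A * B) = compression E A * compression E B := by
  ext1 v
  rw [Module.End.mul_apply, compression_apply_of_mem (hB v v.2)]
  rfl

theorem compressionTrace_mul_comm (hA : ∀ v ∈ E, A v ∈ E) (hB : ∀ v ∈ E, B v ∈ E) :
    compressionTrace E (A * B) = compressionTrace E (B * A) := by
  rw [compressionTrace, LinearMap.comp_apply, LinearMap.comp_apply, compression_mul hA,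
    compression_mul hB, LinearMap.trace_mul_comm]

theorem compressionTrace_eq_of_le (hFE : F ≤ E) (hA : ∀ v, A v ∈ F) :
    compressionTrace E A = compressionTrace F A := by
  have hE : compression E A =
      Submodule.inclusion hFE ∘ₗ (A.toLinearMap.codRestrict F hA ∘ₗ E.subtype) := by
    ext1 v
    exact compression_apply_of_mem (hFE (hA v))
  have hF : compression F A =
      (A.toLinearMap.codRestrict F hA ∘ₗ E.subtype) ∘ₗ Submodule.inclusion hFE := by
    ext1 v
    exact compression_apply_of_mem (hA v)
  rw [compressionTrace, compressionTrace, LinearMap.comp_apply, LinearMap.comp_apply, hE, hF,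
    LinearMap.trace_comp_comm']

theorem norm_compressionTrace_le (A : H →L[ℂ] H) (E : Submodule ℂ H) [FiniteDimensional ℂ E] :
    ‖compressionTrace E A‖ ≤ Module.finrank ℂ E * ‖A‖ := by
  set e := stdOrthonormalBasis ℂ E
  have he (i) : ‖(e i : H)‖ = 1 := e.orthonormal.1 i
  rw [compressionTrace, LinearMap.comp_apply, LinearMap.trace_eq_sum_inner _ e]
  calc ‖∑ i, ⟪e i, compression E A (e i)⟫_ℂ‖
      ≤ ∑ _i : Fin (Module.finrank ℂ E), ‖A‖ := norm_sum_le_of_le _ fun i _ => by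
        refine (norm_inner_le_norm _ _).trans ?_
        rw [e.orthonormal.1 i, one_mul]
        refine (E.norm_orthogonalProjectionOnto_apply_le _).trans ?_
        simpa [he] using A.le_opNorm (e i)
    _ = Module.finrank ℂ E * ‖A‖ := by simp

theorem compressionTrace_of_isIdempotentElem (hA : IsIdempotentElem A) (hAE : ∀ v, A v ∈ E) :
    compressionTrace E A = Module.finrank ℂ A.range := by
  have hle : A.range ≤ E := by
    rintro _ ⟨v, rfl⟩
    exact hAE v
  have : FiniteDimensional ℂ A.range := Submodule.finiteDimensional_of_le hle
  have hid : compression A.range A = 1 := by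
    ext1 ⟨_, v, rfl⟩
    exact (compression_apply_of_mem (LinearMap.mem_range_self _ _)).trans <|
      Subtype.ext (congrArg (fun T : H →L[ℂ] H => T v) hA.eq)
  rw [compressionTrace_eq_of_le hle fun v => ⟨v, rfl⟩, compressionTrace, LinearMap.comp_apply, hid,
    LinearMap.trace_one]

end CompressionTrace

section SpectralCutoff

/-- An odd function that fixes `±1` and vanishes on `[-1/2, 1/2]`. -/
noncomputable def cutoff (x : ℝ) : ℝ := x - x * (max (1 - x ^ 2) (3 / 4))⁻¹ * (1 - x ^ 2)

theorem cutoff_eq_zero {x : ℝ} (hx : x ^ 2 ≤ 1 / 4) : cutoff x = 0 := by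
  rw [cutoff, max_eq_left (by linarith), inv_mul_cancel_right₀ (by linarith), sub_self]

theorem continuous_max_inv {f : ℝ → ℝ} (hf : Continuous f) {c : ℝ} (hc : 0 < c) :
    Continuous fun x => (max (f x) c)⁻¹ :=
  (hf.max continuous_const).inv₀ fun _ => (hc.trans_le (le_max_right _ _)).ne'

theorem continuous_cutoff : Continuous cutoff := by
  have := continuous_max_inv (f := fun x => 1 - x ^ 2) (by fun_prop)
    (by norm_num : (0 : ℝ) < 3 / 4)
  unfold cutoff
  fun_prop

variable {A : Type*} [CStarAlgebra A] {D : A}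

theorem cfc_cutoff (hD : IsSelfAdjoint D) :
    cfc cutoff D = D - D * cfc (fun x : ℝ => (max (1 - x) (3 / 4))⁻¹) (D ^ 2) * (1 - D ^ 2) := by
  have hcont : Continuous fun x : ℝ => (max (1 - x) (3 / 4))⁻¹ :=
    continuous_max_inv (by fun_prop) (by norm_num)
  have hcont₁ := hcont.continuousOn (s := (fun x : ℝ => x ^ 2) '' spectrum ℝ D)
  have hcont₂ : ContinuousOn (fun x : ℝ => (max (1 - x ^ 2) (3 / 4))⁻¹) (spectrum ℝ D) :=
    (hcont.comp (continuous_pow 2)).continuousOn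
  rw [← cfc_comp_pow _ 2 D hcont₁]
  unfold cutoff
  rw [cfc_sub _ _ D, cfc_mul _ _ D, cfc_mul _ _ D, cfc_sub _ _ D, cfc_pow .., cfc_id' ℝ D,
    cfc_const_one ℝ D]

theorem exists_norm_le_two_mul_mul_cfc_cutoff (hD : IsSelfAdjoint D) :
    ∃ B : A, ‖B‖ ≤ 2 ∧ B * D * cfc cutoff D = cfc cutoff D := by
  set h : ℝ → ℝ := fun x => x * (max (x ^ 2) (1 / 4))⁻¹
  have hcont : Continuous h :=
    continuous_id.mul (continuous_max_inv (by fun_prop) (by norm_num))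
  have hcutoff := continuous_cutoff.continuousOn (s := spectrum ℝ D)
  refine ⟨cfc h D, norm_cfc_le zero_le_two fun x _ => ?_, ?_⟩
  · have hpos : 0 < max (x ^ 2) (1 / 4) := lt_max_of_lt_right (by norm_num)
    rw [Real.norm_eq_abs, abs_mul, abs_inv, abs_of_pos hpos, ← div_eq_mul_inv, div_le_iff₀ hpos]
    rw [mul_max_of_nonneg _ _ zero_le_two, ← sq_abs x]
    rcases le_total |x| (1 / 2) with hx | hx
    · exact le_max_of_le_right (by linarith)
    · exact le_max_of_le_left (by nlinarith)
  · nth_rw 2 [← cfc_id' ℝ D]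
    rw [← cfc_mul _ _ D hcont.continuousOn, ← cfc_mul _ _ D (by fun_prop) hcutoff]
    refine cfc_congr fun x _ => ?_
    rcases le_total (x ^ 2) (1 / 4) with hx | hx
    · simp only [cutoff_eq_zero hx, mul_zero]
    · have hx₀ : x ≠ 0 := by rintro rfl; norm_num at hx
      simp only [h, max_eq_left hx]
      field_simp

theorem one_sub_sub_mul_sub {R : Type*} [Ring R] {p q : R} (hp : IsIdempotentElem p)
    (hq : IsIdempotentElem q) : (1 - p - q) * (p - q) = -((p - q) * (1 - p - q)) := by
  simp only [mul_sub, sub_mul, mul_one, one_mul, hp.eq, hq.eq]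
  abel

theorem one_sub_sub_mul_self {R : Type*} [Ring R] {p q : R} (hp : IsIdempotentElem p)
    (hq : IsIdempotentElem q) : (1 - p - q) * (1 - p - q) = 1 - (p - q) ^ 2 := by
  simp only [pow_two, mul_sub, sub_mul, mul_one, one_mul, hp.eq, hq.eq]
  abel

end SpectralCutoff

section RankDifference

variable {H : Type*} [NormedAddCommGroup H] [InnerProductSpace ℂ H]

theorem finiteDimensional_of_forall_eq_zero {F : Submodule ℂ H} {s : Finset H}
    (h : ∀ v ∈ F, (∀ e ∈ s, ⟪e, v⟫_ℂ = 0) → v = 0) :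
    FiniteDimensional ℂ F ∧ Module.finrank ℂ F ≤ s.card := by
  set φ : F →ₗ[ℂ] (s → ℂ) := LinearMap.pi (fun e : s => (innerₛₗ ℂ (e : H))) ∘ₗ F.subtype
  have hφ : Function.Injective φ := by
    refine (injective_iff_map_eq_zero φ).mpr fun v hv => ?_
    exact Subtype.ext (h v v.2 fun e he => congrFun hv ⟨e, he⟩)
  refine ⟨FiniteDimensional.of_injective φ hφ, ?_⟩
  simpa using LinearMap.finrank_le_finrank_of_injective hφ

variable [CompleteSpace H]

theorem compressionTrace_cfc_cutoff {P Q : H →L[ℂ] H} (hP : IsStarProjection P)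
    (hQ : IsStarProjection Q) {E : Submodule ℂ H} [FiniteDimensional ℂ E]
    (hPE : ∀ v, P v ∈ E) (hQE : ∀ v, Q v ∈ E) :
    compressionTrace E (cfc cutoff (P - Q)) =
      Module.finrank ℂ P.range - Module.finrank ℂ Q.range := by
  set D := P - Q
  set S := 1 - P - Q
  set K : H →L[ℂ] H := cfc (fun x : ℝ => (max (1 - x) (3 / 4))⁻¹) (D ^ 2)
  have hDE (v : H) : D v ∈ E := E.sub_mem (hPE v) (hQE v)
  have hSE : ∀ v ∈ E, S v ∈ E := fun v hv => E.sub_mem (E.sub_mem hv (hPE v)) (hQE v)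
  have hSD : S * D = -(D * S) := one_sub_sub_mul_sub hP.isIdempotentElem hQ.isIdempotentElem
  have hKS : Commute K S := by
    refine Commute.cfc_real (Eq.symm ?_) _
    rw [pow_two, ← mul_assoc, hSD, neg_mul, mul_assoc, hSD, mul_neg, neg_neg, mul_assoc]
  have hanti : S * (D * K * S) = -(D * K * S * S) := by
    rw [← mul_assoc, ← mul_assoc, hSD, neg_mul, mul_assoc D S K, hKS.symm.eq, neg_mul, ← mul_assoc]
  have htrace : compressionTrace E (D * K * S * S) = 0 := by
    refine self_eq_neg.mp ?_
    rw [← map_neg, ← hanti]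
    exact compressionTrace_mul_comm (fun v _ => hDE _) hSE
  rw [cfc_cutoff (hP.isSelfAdjoint.sub hQ.isSelfAdjoint),
    ← one_sub_sub_mul_self hP.isIdempotentElem hQ.isIdempotentElem, ← mul_assoc, map_sub, htrace,
    sub_zero, map_sub, compressionTrace_of_isIdempotentElem hP.isIdempotentElem hPE,
    compressionTrace_of_isIdempotentElem hQ.isIdempotentElem hQE]

theorem finrank_range_cfc_cutoff_le {D : H →L[ℂ] H} (hD : IsSelfAdjoint D) {s : Finset H}
    (hs : ∀ f, (∀ e ∈ s, ⟪e, f⟫_ℂ = 0) → ‖D f‖ ≤ 1 / 4 * ‖f‖) :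
    FiniteDimensional ℂ (cfc cutoff D).range ∧
      Module.finrank ℂ (cfc cutoff D).range ≤ s.card := by
  obtain ⟨B, hB, hBD⟩ := exists_norm_le_two_mul_mul_cfc_cutoff hD
  refine finiteDimensional_of_forall_eq_zero ?_
  rintro _ ⟨w, rfl⟩ hw
  set v := cfc cutoff D w
  have hv : B (D v) = v := congrArg (fun T : H →L[ℂ] H => T w) hBD
  have hle : ‖v‖ ≤ 2 * (1 / 4 * ‖v‖) :=
    calc ‖v‖ = ‖B (D v)‖ := by rw [hv]
      _ ≤ 2 * ‖D v‖ := B.le_of_opNorm_le hB _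
      _ ≤ 2 * (1 / 4 * ‖v‖) := by gcongr; exact hs v hw
  have hv₀ : ‖v‖ ≤ 0 := by linarith
  exact norm_le_zero_iff.mp hv₀

theorem cfc_cutoff_apply_mem {D : H →L[ℂ] H} (hD : IsSelfAdjoint D) {E : Submodule ℂ H}
    (hDE : ∀ v, D v ∈ E) (v : H) : cfc cutoff D v ∈ E := by
  rw [cfc_cutoff hD, mul_assoc]
  exact E.sub_mem (hDE _) (hDE _)

/-- The number `rank P - rank Q`. -/
noncomputable def rankDiff (P Q : H →L[ℂ] H) : ℤ :=
  Module.finrank ℂ P.range - Module.finrank ℂ Q.range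

theorem abs_rankDiff_sub_rankDiff_le {P Q P' Q' : H →L[ℂ] H} (hP : IsStarProjection P)
    (hQ : IsStarProjection Q) (hP' : IsStarProjection P') (hQ' : IsStarProjection Q')
    [FiniteDimensional ℂ P.range] [FiniteDimensional ℂ Q.range] [FiniteDimensional ℂ P'.range]
    [FiniteDimensional ℂ Q'.range] {s : Finset H}
    (hs : ∀ f, (∀ e ∈ s, ⟪e, f⟫_ℂ = 0) → ‖(P - Q) f‖ ≤ 1 / 4 * ‖f‖)
    (hs' : ∀ f, (∀ e ∈ s, ⟪e, f⟫_ℂ = 0) → ‖(P' - Q') f‖ ≤ 1 / 4 * ‖f‖) :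
    |(rankDiff P Q - rankDiff P' Q' : ℝ)| ≤
      2 * s.card * ‖cfc cutoff (P - Q) - cfc cutoff (P' - Q')‖ := by
  have hD : IsSelfAdjoint (P - Q) := hP.isSelfAdjoint.sub hQ.isSelfAdjoint
  have hD' : IsSelfAdjoint (P' - Q') := hP'.isSelfAdjoint.sub hQ'.isSelfAdjoint
  obtain ⟨_, hrank⟩ := finrank_range_cfc_cutoff_le hD hs
  obtain ⟨_, hrank'⟩ := finrank_range_cfc_cutoff_le hD' hs'
  set g := cfc cutoff (P - Q)
  set g' := cfc cutoff (P' - Q')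
  set E := P.range ⊔ Q.range ⊔ (P'.range ⊔ Q'.range)
  have hPE (v : H) : P v ∈ E := Submodule.mem_sup_left (Submodule.mem_sup_left ⟨v, rfl⟩)
  have hQE (v : H) : Q v ∈ E := Submodule.mem_sup_left (Submodule.mem_sup_right ⟨v, rfl⟩)
  have hPE' (v : H) : P' v ∈ E := Submodule.mem_sup_right (Submodule.mem_sup_left ⟨v, rfl⟩)
  have hQE' (v : H) : Q' v ∈ E := Submodule.mem_sup_right (Submodule.mem_sup_right ⟨v, rfl⟩)
  have htrace : ((rankDiff P Q - rankDiff P' Q' : ℝ) : ℂ) = compressionTrace E (g - g') := by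
    rw [map_sub, compressionTrace_cfc_cutoff hP hQ hPE hQE,
      compressionTrace_cfc_cutoff hP' hQ' hPE' hQE', rankDiff, rankDiff]
    push_cast
    rfl
  set F := g.range ⊔ g'.range
  have hgF (v : H) : (g - g') v ∈ F :=
    F.sub_mem (Submodule.mem_sup_left ⟨v, rfl⟩) (Submodule.mem_sup_right ⟨v, rfl⟩)
  have hFE : F ≤ E := by
    refine sup_le ?_ ?_ <;> rintro _ ⟨v, rfl⟩
    · exact cfc_cutoff_apply_mem hD (fun v => E.sub_mem (hPE v) (hQE v)) v
    · exact cfc_cutoff_apply_mem hD' (fun v => E.sub_mem (hPE' v) (hQE' v)) v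
  have hF : Module.finrank ℂ F ≤ 2 * s.card :=
    (Submodule.finrank_add_le_finrank_add_finrank _ _).trans (by lia)
  calc |(rankDiff P Q - rankDiff P' Q' : ℝ)| = ‖compressionTrace F (g - g')‖ := by
        rw [← compressionTrace_eq_of_le hFE hgF, ← htrace, Complex.norm_real, Real.norm_eq_abs]
    _ ≤ Module.finrank ℂ F * ‖g - g'‖ := norm_compressionTrace_le _ F
    _ ≤ 2 * s.card * ‖g - g'‖ := by gcongr; exact_mod_cast hF

end RankDifference

section RankConstant

theorem eqOn_of_forall_exists_eventually_eq {X Y : Type*} [TopologicalSpace X]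
    [PreconnectedSpace X] {s : Set X} (hs : Dense s) {f : X → Y}
    (hf : ∀ b, ∃ c, ∀ᶠ x in 𝓝[s] b, f x = c) {x y : X} (hx : x ∈ s) (hy : y ∈ s) : f x = f y := by
  let _ : TopologicalSpace Y := ⊥
  have : DiscreteTopology Y := ⟨rfl⟩
  have htendsto (b : X) : ∃ c, Filter.Tendsto f (𝓝[s] b) (𝓝 c) :=
    (hf b).imp fun c hc => tendsto_const_nhds.congr' (hc.mono fun _ => Eq.symm)
  have hcont : Continuous (extendFrom s f) := continuous_extendFrom hs htendsto
  have hext {b : X} (hb : b ∈ s) : extendFrom s f b = f b := by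
    obtain ⟨c, hc⟩ := hf b
    have hbc : f b = c := hc.self_of_nhdsWithin hb
    exact extendFrom_eq (subset_closure hb)
      (tendsto_const_nhds.congr' (hc.mono fun _ h => hbc.trans h.symm))
  rw [← hext hx, ← hext hy]
  exact (IsLocallyConstant.iff_continuous _).mpr hcont |>.apply_eq_of_isPreconnected
    isPreconnected_univ (Set.mem_univ _) (Set.mem_univ _)

variable {H : Type*} [NormedAddCommGroup H] [InnerProductSpace ℂ H]

theorem finrank_range_eq_zero_iff {T : H →L[ℂ] H} [FiniteDimensional ℂ T.range] :
    Module.finrank ℂ T.range = 0 ↔ T = 0 := by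
  rw [Submodule.finrank_eq_zero, LinearMap.range_eq_bot, ← ContinuousLinearMap.toLinearMap_zero,
    ContinuousLinearMap.coe_inj]

variable [CompleteSpace H] {P Q : ℝ → H →L[ℂ] H}

theorem continuous_cfc_cutoff_sub (hP : ∀ x, IsStarProjection (P x))
    (hQ : ∀ x, IsStarProjection (Q x)) (hcont : Continuous (P - Q)) :
    Continuous fun x => cfc cutoff (P x - Q x) := by
  refine hcont.cfc' (isCompact_closedBall 0 2) cutoff (fun x => ?_) continuous_cutoff.continuousOn
    fun x => (hP x).isSelfAdjoint.sub (hQ x).isSelfAdjoint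
  refine (spectrum.subset_closedBall_norm_mul _).trans (Metric.closedBall_subset_closedBall ?_)
  calc ‖P x - Q x‖ * ‖(1 : H →L[ℂ] H)‖
      ≤ (‖P x‖ + ‖Q x‖) * ‖(1 : H →L[ℂ] H)‖ := by gcongr; exact norm_sub_le _ _
    _ ≤ (1 + 1) * 1 := by
        gcongr
        exacts [(hP x).norm_le, (hQ x).norm_le, ContinuousLinearMap.norm_id_le]
    _ = 2 := by norm_num

theorem rankDiff_eq_of_mem (hP : ∀ x, IsStarProjection (P x)) (hQ : ∀ x, IsStarProjection (Q x))
    (hcont : Continuous (P - Q)) (htight : UniformlyTight (P - Q)) {s : Set ℝ} (hs : Dense s)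
    (hfin : ∀ x ∈ s, FiniteDimensional ℂ (P x).range ∧ FiniteDimensional ℂ (Q x).range)
    {x y : ℝ} (hx : x ∈ s) (hy : y ∈ s) : rankDiff (P x) (Q x) = rankDiff (P y) (Q y) := by
  obtain ⟨S, hS⟩ := htight (1 / 4) (by norm_num)
  have hG := continuous_cfc_cutoff_sub hP hQ hcont
  set G := fun x => cfc cutoff (P x - Q x)
  refine eqOn_of_forall_exists_eventually_eq hs (f := fun x => rankDiff (P x) (Q x)) (fun b => ?_)
    hx hy
  have hc : (0 : ℝ) < 1 / (2 * (2 * S.card + 1)) := by positivity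
  have hnear : ∀ᶠ x in 𝓝[s] b, x ∈ s ∧ dist (G x) (G b) < 1 / (2 * (2 * S.card + 1)) :=
    (eventually_mem_nhdsWithin).and
      (nhdsWithin_le_nhds (hG.continuousAt.eventually (Metric.ball_mem_nhds _ hc)))
  have : (𝓝[s] b).NeBot := mem_closure_iff_nhdsWithin_neBot.mp (hs b)
  obtain ⟨x₀, hx₀, hdist₀⟩ := hnear.exists
  refine ⟨rankDiff (P x₀) (Q x₀), hnear.mono fun x ⟨hxs, hdist⟩ => ?_⟩
  obtain ⟨_, _⟩ := hfin x hxs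
  obtain ⟨_, _⟩ := hfin x₀ hx₀
  have hlt : ‖G x - G x₀‖ < 1 / (2 * S.card + 1) := by
    rw [← dist_eq_norm]
    calc dist (G x) (G x₀) ≤ dist (G x) (G b) + dist (G x₀) (G b) := dist_triangle_right ..
      _ < _ := add_lt_add hdist hdist₀
      _ = 1 / (2 * S.card + 1) := by field_simp; norm_num
  have habs : |(rankDiff (P x) (Q x) - rankDiff (P x₀) (Q x₀) : ℝ)| < 1 := by
    refine (abs_rankDiff_sub_rankDiff_le (hP x) (hQ x) (hP x₀) (hQ x₀) (hS x) (hS x₀)).trans_lt ?_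
    calc 2 * S.card * ‖G x - G x₀‖ ≤ 2 * S.card * (1 / (2 * S.card + 1)) := by gcongr
      _ < 1 := by rw [mul_one_div, div_lt_one (by positivity)]; linarith
  rw [← sub_eq_zero, ← Int.abs_lt_one_iff]
  exact_mod_cast habs

end RankConstant

section FiberRank

variable {N : ℕ}

theorem dense_adicSubring (hN : 2 ≤ N) : Dense (adicSubring N : Set ℝ) := by
  have : NeZero N := ⟨by lia⟩
  refine (adicSubring N).toAddSubgroup.dense_of_not_isolated_zero fun ε hε => ?_
  have hN' : (1 : ℝ) < N := by exact_mod_cast hN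
  obtain ⟨J, hJ⟩ := exists_pow_lt_of_lt_one hε (inv_lt_one_of_one_lt₀ hN')
  rw [inv_pow] at hJ
  exact ⟨_, inv_pow_mem_adicSubring J, by positivity, hJ⟩

variable [NeZero N] {ρ : BS N →* unitary (L2 (BS N) →L[ℂ] L2 (BS N))} (hρ : IsRightRegular ρ)
  {p : groupCStar ρ}

include hρ

theorem finiteDimensional_range_fiber (hN : 2 ≤ N) (hp : IsStarProjection p)
    (hp₀ : fiber hρ 0 p = 0) {y : ℝ} (hy : y ∈ adicSubring N) :
    FiniteDimensional ℂ (fiber hρ y p).range := by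
  obtain ⟨s, hs⟩ := uniformlyTight_fiberDiff hρ hN hy p (1 / 4) (by norm_num)
  refine (finiteDimensional_of_forall_eq_zero (s := s) ?_).1
  rintro _ ⟨w, rfl⟩ hw
  set v := fiber hρ y p w
  have hv : fiber hρ y p v = v :=
    congrArg (fun T : L2 ℤ →L[ℂ] L2 ℤ => T w) (hp.map (fiber hρ y)).isIdempotentElem.eq
  have hle := hs 0 v hw
  rw [fiberDiff, zero_add, hp₀, sub_zero, hv] at hle
  have hv₀ : ‖v‖ ≤ 0 := by linarith
  exact norm_le_zero_iff.mp hv₀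

/-- The rank of the fibre of a projection `p` at `x`. -/
noncomputable def fiberRank (p : groupCStar ρ) (x : ℝ) : ℕ :=
  Module.finrank ℂ (fiber hρ x p).range

theorem fiberRank_eq_zero_iff (hN : 2 ≤ N) (hp : IsStarProjection p) (hp₀ : fiber hρ 0 p = 0)
    {y : ℝ} (hy : y ∈ adicSubring N) : fiberRank hρ p y = 0 ↔ fiber hρ y p = 0 :=
  have := finiteDimensional_range_fiber hρ hN hp hp₀ hy
  finrank_range_eq_zero_iff

theorem fiberRank_add (hN : 2 ≤ N) (hp : IsStarProjection p) (hp₀ : fiber hρ 0 p = 0)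
    {x y : ℝ} (hx : x ∈ adicSubring N) (hy : y ∈ adicSubring N) :
    fiberRank hρ p (x + y) = fiberRank hρ p x + fiberRank hρ p y := by
  have hproj (z : ℝ) : IsStarProjection (fiber hρ z p) := hp.map _
  have hconst : (fiberRank hρ p (x + y) : ℤ) - fiberRank hρ p x =
      fiberRank hρ p (0 + y) - fiberRank hρ p 0 :=
    rankDiff_eq_of_mem (fun x => hproj (x + y)) hproj (continuous_fiberDiff hρ hy p)
      (uniformlyTight_fiberDiff hρ hN hy p) (dense_adicSubring hN)
      (fun z hz => ⟨finiteDimensional_range_fiber hρ hN hp hp₀ (add_mem hz hy),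
        finiteDimensional_range_fiber hρ hN hp hp₀ hz⟩) hx (zero_mem _)
  rw [zero_add, (fiberRank_eq_zero_iff hρ hN hp hp₀ (zero_mem _)).mpr hp₀] at hconst
  lia

theorem fiber_eq_zero_of_mem (hN : 2 ≤ N) (hp : IsStarProjection p) (hp₀ : fiber hρ 0 p = 0)
    {y : ℝ} (hy : y ∈ adicSubring N) : fiber hρ y p = 0 := by
  have hadd := fiberRank_add hρ hN hp hp₀ (neg_mem hy) hy
  rw [neg_add_cancel, (fiberRank_eq_zero_iff hρ hN hp hp₀ (zero_mem _)).mpr hp₀] at hadd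
  exact (fiberRank_eq_zero_iff hρ hN hp hp₀ hy).mp (by lia)

end FiberRank

section Averaging

theorem fourierChar_eq_one_iff {x : ℝ} : 𝐞 x = 1 ↔ ∃ m : ℤ, x = m := by
  refine ⟨fun h => ?_, fun ⟨m, hm⟩ => hm ▸ fourierChar_intCast m⟩
  have hx := congrArg ((↑) : Circle → ℂ) h
  rw [Real.fourierChar_apply, Circle.coe_one, Complex.exp_eq_one_iff] at hx
  obtain ⟨m, hm⟩ := hx
  refine ⟨m, ?_⟩
  rw [← mul_assoc, mul_eq_mul_right_iff, or_iff_left Complex.I_ne_zero] at hm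
  have hm' : 2 * Real.pi * x = m * (2 * Real.pi) := by exact_mod_cast hm
  rwa [mul_comm, mul_left_inj' Real.two_pi_pos.ne'] at hm'

theorem sum_fourierChar_mul_div_eq_zero {Q : ℕ} {k : ℤ} (hk : k ≠ 0) (hkQ : |k| < Q) :
    ∑ s ∈ Finset.range Q, (𝐞 (s * (k / Q)) : ℂ) = 0 := by
  have hQ : (Q : ℝ) ≠ 0 := by
    have : 0 < (Q : ℤ) := (abs_nonneg k).trans_lt hkQ
    exact_mod_cast this.ne'
  have hpow (s : ℕ) : (𝐞 (s * (k / Q)) : ℂ) = (𝐞 (k / Q : ℝ) : ℂ) ^ s := by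
    rw [← nsmul_eq_mul, AddChar.map_nsmul_eq_pow, Circle.coe_pow]
  have hne : (𝐞 (k / Q : ℝ) : ℂ) ≠ 1 := by
    rw [Circle.coe_eq_one.ne, Ne, fourierChar_eq_one_iff]
    rintro ⟨m, hm⟩
    rw [div_eq_iff hQ] at hm
    exact hk (Int.eq_zero_of_abs_lt_dvd ⟨m, by rw [mul_comm]; exact_mod_cast hm⟩ hkQ)
  simp only [hpow]
  rw [geom_sum_eq hne, ← hpow, mul_div_cancel₀ _ hQ, fourierChar_intCast, Circle.coe_one, sub_self,
    zero_div]

theorem exists_pow_forall_abs_lt {N : ℕ} (hN : 2 ≤ N) {ι : Type*} (S : Finset ι) (k : ι → ℤ) :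
    ∃ R : ℕ, ∀ i ∈ S, |k i| < (N ^ R : ℕ) := by
  refine ⟨S.sup fun i => (k i).natAbs, fun i hi => ?_⟩
  rw [Int.abs_eq_natAbs, Nat.cast_lt]
  exact (Finset.le_sup (f := fun i => (k i).natAbs) hi).trans_lt (Nat.lt_pow_self hN)

variable {N : ℕ} [NeZero N]

theorem inner_delta_zero_weightedShift (x : ℝ) (g : BS N) :
    ⟪delta ℤ 0, (weightedShift x g : L2 ℤ →L[ℂ] L2 ℤ) (delta ℤ 0)⟫_ℂ =
      if height g = 0 then (𝐞 (translation g * x) : ℂ) else 0 := by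
  rw [inner_delta, weightedShift_apply, zpow_zero, one_mul, zero_add, delta_apply, mul_ite, mul_one,
    mul_zero]

theorem exists_sum_inner_weightedShift_eq [DecidableEq (BS N)] (hN : 2 ≤ N) (S : Finset (BS N)) :
    ∃ (Q : ℕ) (y : ℕ → ℝ), 0 < Q ∧ (∀ s, y s ∈ adicSubring N) ∧
      ∀ g ∈ S, ∑ s ∈ Finset.range Q,
        ⟪delta ℤ 0, (weightedShift (y s) g : L2 ℤ →L[ℂ] L2 ℤ) (delta ℤ 0)⟫_ℂ =
          if g = 1 then (Q : ℂ) else 0 := by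
  obtain ⟨M, hM⟩ := exists_forall_translation_mul_pow_eq S
  choose! k hk using hM
  obtain ⟨R, hR⟩ := exists_pow_forall_abs_lt hN S k
  have hN₀ : (N : ℝ) ≠ 0 := NeZero.ne _
  have hQ : 0 < N ^ R := by positivity
  generalize hQ' : N ^ R = Q at hR hQ
  refine ⟨Q, fun s => s * (N ^ M / Q), hQ, fun s => ⟨R, s * N ^ M, ?_⟩, fun g hg => ?_⟩
  · rw [← hQ']
    push_cast
    field_simp
  simp only [inner_delta_zero_weightedShift]
  split_ifs with hj hg₁ hg₁
  · simp [hg₁, translation]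
  · have htrans (s : ℕ) : translation g * (s * (N ^ M / Q)) = s * (k g / Q) := by
      rw [← hk g hg]
      ring
    have hk₀ : k g ≠ 0 := fun hk₀ => hg₁ <| eq_one_of_translation_eq_zero (by
      simpa [hk₀, hN₀] using hk g hg) hj
    simp only [htrans, sum_fourierChar_mul_div_eq_zero hk₀ (hR g hg)]
  · simp [hg₁, height] at hj
  · exact Finset.sum_const_zero

theorem norm_apply_one_le (hN : 2 ≤ N) {a : BS N →₀ ℂ} {ε : ℝ}
    (ha : ∀ y ∈ adicSubring N, ‖groupEval (weightedShift y) a‖ ≤ ε) : ‖a 1‖ ≤ ε := by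
  classical
  obtain ⟨Q, y, hQ, hy, hsum⟩ := exists_sum_inner_weightedShift_eq hN a.support
  have hQa : ∑ s ∈ Finset.range Q, ⟪delta ℤ 0, groupEval (weightedShift (y s)) a (delta ℤ 0)⟫_ℂ =
      Q * a 1 := by
    simp only [groupEval_apply, inner_sum, inner_smul_right]
    rw [Finset.sum_comm]
    simp only [← Finset.mul_sum]
    rw [Finset.sum_congr rfl fun g hg => by rw [hsum g hg]]
    simp +contextual [mul_comm]
  have hle : Q * ‖a 1‖ ≤ Q * ε := by
    calc Q * ‖a 1‖ = ‖(Q * a 1 : ℂ)‖ := by rw [norm_mul, Complex.norm_natCast]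
      _ ≤ ∑ _s ∈ Finset.range Q, ε := by
          rw [← hQa]
          refine norm_sum_le_of_le _ fun s _ => ?_
          refine (norm_inner_le_norm _ _).trans ?_
          simpa [norm_delta] using
            (groupEval (weightedShift (y s)) a).le_of_opNorm_le (ha _ (hy s)) (delta ℤ 0)
      _ = Q * ε := by simp
  exact le_of_mul_le_mul_left hle (by exact_mod_cast hQ)

variable {ρ : BS N →* unitary (L2 (BS N) →L[ℂ] L2 (BS N))} (hρ : IsRightRegular ρ)
include hρ

theorem norm_inner_delta_one_le (hN : 2 ≤ N) {a : groupCStar ρ} {ε : ℝ}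
    (ha : ∀ y ∈ adicSubring N, ‖fiber hρ y a‖ ≤ ε) :
    ‖⟪delta (BS N) 1, (a : L2 (BS N) →L[ℂ] L2 (BS N)) (delta (BS N) 1)⟫_ℂ‖ ≤ ε := by
  refine le_of_forall_pos_le_add fun η hη => ?_
  obtain ⟨b, hb⟩ := (groupCStar.denseRange_eval ρ).exists_dist_lt a (half_pos hη)
  rw [dist_eq_norm] at hb
  have hb₁ : ‖b 1‖ ≤ ε + η / 2 := norm_apply_one_le hN fun y hy => by
    rw [← groupCStar.map_eval (fiber_of hρ y)]
    calc ‖fiber hρ y (groupCStar.eval ρ b)‖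
        ≤ ‖fiber hρ y a‖ + ‖fiber hρ y (a - groupCStar.eval ρ b)‖ := by
          rw [map_sub]
          exact norm_le_norm_add_norm_sub _ _
      _ ≤ ε + η / 2 := add_le_add (ha y hy) ((norm_fiber_le hρ _ _).trans hb.le)
  set d : L2 (BS N) →L[ℂ] L2 (BS N) := a - groupEval ρ b
  have hd : ‖⟪delta (BS N) 1, d (delta (BS N) 1)⟫_ℂ‖ ≤ η / 2 := by
    refine (norm_inner_le_norm _ _).trans ?_
    simpa [norm_delta] using d.le_of_opNorm_le hb.le (delta (BS N) 1)
  rw [sub_apply, inner_sub_right, hρ.inner_delta_one_groupEval] at hd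
  have := norm_le_norm_add_norm_sub' (⟪delta (BS N) 1,
    (a : L2 (BS N) →L[ℂ] L2 (BS N)) (delta (BS N) 1)⟫_ℂ) (b 1)
  linarith

theorem eq_zero_of_forall_fiber_eq_zero (hN : 2 ≤ N) {a : groupCStar ρ}
    (ha : ∀ y ∈ adicSubring N, fiber hρ y a = 0) : a = 0 := by
  refine Subtype.ext (ContinuousLinearMap.ext_on dense_span_delta ?_)
  rintro _ ⟨g, rfl⟩
  set b := a * groupCStar.of ρ g⁻¹
  have hb := norm_inner_delta_one_le hρ hN (a := star b * b) (ε := 0) fun y hy => by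
    rw [map_mul, map_mul, ha y hy, zero_mul, mul_zero, norm_zero]
  have hbδ : (b : L2 (BS N) →L[ℂ] L2 (BS N)) (delta (BS N) 1) =
      (a : L2 (BS N) →L[ℂ] L2 (BS N)) (delta (BS N) g) := by
    change (a : L2 (BS N) →L[ℂ] L2 (BS N)) ((ρ g⁻¹ : L2 (BS N) →L[ℂ] L2 (BS N)) _) = _
    rw [hρ.apply_delta, inv_inv, one_mul]
  have hinner := norm_le_zero_iff.mp hb
  change ⟪delta (BS N) 1, star (b : L2 (BS N) →L[ℂ] L2 (BS N))
    ((b : L2 (BS N) →L[ℂ] L2 (BS N)) (delta (BS N) 1))⟫_ℂ = 0 at hinner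
  rw [ContinuousLinearMap.star_eq_adjoint, ContinuousLinearMap.adjoint_inner_right, hbδ] at hinner
  exact inner_self_eq_zero.mp hinner

end Averaging

section BilateralShift

/-- The bilateral shift `f ↦ f (· + 1)` of `ℓ²(ℤ)`. -/
noncomputable def bilateralShift : unitary (L2 ℤ →L[ℂ] L2 ℤ) :=
  monomialUnitary 1 (Equiv.addRight 1)

theorem bilateralShift_apply (f : L2 ℤ) (n : ℤ) :
    (bilateralShift : L2 ℤ →L[ℂ] L2 ℤ) f n = f (n + 1) :=
  one_mul _

theorem bilateralShift_zpow_apply (k : ℤ) (f : L2 ℤ) (n : ℤ) :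
    ((bilateralShift ^ k : unitary (L2 ℤ →L[ℂ] L2 ℤ)) : L2 ℤ →L[ℂ] L2 ℤ) f n = f (n + k) := by
  induction k generalizing f n with
  | zero => simp
  | succ k ih =>
    rw [zpow_add_one, Submonoid.coe_mul, mul_apply_eq_comp, ih, bilateralShift_apply, add_assoc]
  | pred k ih =>
    have hinv (f : L2 ℤ) (n : ℤ) :
        ((bilateralShift⁻¹ : unitary (L2 ℤ →L[ℂ] L2 ℤ)) : L2 ℤ →L[ℂ] L2 ℤ) f n = f (n - 1) := by
      rw [← sub_add_cancel n 1, ← bilateralShift_apply, ← mul_apply_eq_comp, ← Submonoid.coe_mul,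
        mul_inv_cancel, sub_add_cancel]
      rfl
    rw [zpow_sub_one, Submonoid.coe_mul, mul_apply_eq_comp, ih, hinv, add_sub_assoc]

theorem mul_mem_spectrum_bilateralShift (z : Circle) {w : ℂ}
    (hw : w ∈ spectrum ℂ (bilateralShift : L2 ℤ →L[ℂ] L2 ℤ)) :
    z * w ∈ spectrum ℂ (bilateralShift : L2 ℤ →L[ℂ] L2 ℤ) := by
  set U := Unitary.toUnits (monomialUnitary (fun n : ℤ => z ^ n) 1)
  have hcomm : Circle.toUnits z • (U * (bilateralShift : L2 ℤ →L[ℂ] L2 ℤ)) =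
      (bilateralShift : L2 ℤ →L[ℂ] L2 ℤ) * U := by
    ext f n
    change (z : ℂ) * ((z ^ n : Circle) * ((1 : Circle) * f (n + 1))) =
      (1 : Circle) * ((z ^ (n + 1) : Circle) * f (n + 1))
    rw [zpow_add_one, Circle.coe_mul, Circle.coe_one]
    ring
  have hconj : Circle.toUnits z • (U * (bilateralShift : L2 ℤ →L[ℂ] L2 ℤ) * ↑U⁻¹) =
      (bilateralShift : L2 ℤ →L[ℂ] L2 ℤ) := by
    rw [← smul_mul_assoc, hcomm, Units.mul_inv_cancel_right]
  rw [← hconj]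
  refine spectrum.smul_mem_smul_iff.mpr ?_
  rwa [spectrum.units_conjugate]

theorem spectrum_bilateralShift :
    spectrum ℂ (bilateralShift : L2 ℤ →L[ℂ] L2 ℤ) = Submonoid.unitSphere ℂ := by
  have hsub := Unitary.spectrum_subset_circle (𝕜 := ℂ) bilateralShift
  refine hsub.antisymm fun w hw => ?_
  have : Nontrivial (L2 ℤ) := ⟨delta ℤ 0, 0, norm_ne_zero_iff.mp (by simp [norm_delta])⟩
  obtain ⟨w₀, hw₀⟩ := spectrum.nonempty (bilateralShift : L2 ℤ →L[ℂ] L2 ℤ)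
  have hw₀' : w₀ ≠ 0 := ne_zero_of_mem_unit_sphere ⟨w₀, hsub hw₀⟩
  let z : Circle := ⟨w, hw⟩ / ⟨w₀, hsub hw₀⟩
  have hz : (z : ℂ) * w₀ = w := div_mul_cancel₀ w hw₀'
  exact hz ▸ mul_mem_spectrum_bilateralShift z hw₀

theorem isPreconnected_spectrum_bilateralShift :
    IsPreconnected (spectrum ℂ (bilateralShift : L2 ℤ →L[ℂ] L2 ℤ)) := by
  rw [spectrum_bilateralShift]
  exact isPreconnected_sphere (Complex.rank_real_complex ▸ Nat.one_lt_ofNat) 0 1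

end BilateralShift

section Projections

variable {N : ℕ} [NeZero N] {ρ : BS N →* unitary (L2 (BS N) →L[ℂ] L2 (BS N))}
  (hρ : IsRightRegular ρ)

theorem weightedShift_zero (g : BS N) : weightedShift 0 g = bilateralShift ^ height g := by
  ext f n
  rw [weightedShift_apply, bilateralShift_zpow_apply, mul_zero, AddChar.map_zero_eq_one]
  exact one_mul _

include hρ

theorem fiber_zero_mem_elemental (a : groupCStar ρ) :
    fiber hρ 0 a ∈ StarAlgebra.elemental ℂ (bilateralShift : L2 ℤ →L[ℂ] L2 ℤ) := by
  induction a using groupCStar.induction with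
  | of g =>
    rw [fiber_of, weightedShift_zero]
    have hmem : (bilateralShift : L2 ℤ →L[ℂ] L2 ℤ) ∈
        StarAlgebra.elemental ℂ (bilateralShift : L2 ℤ →L[ℂ] L2 ℤ) :=
      StarAlgebra.elemental.self_mem ℂ _
    obtain ⟨k, hk⟩ := Int.eq_nat_or_neg (height g)
    rcases hk with hk | hk <;> rw [hk]
    · rw [zpow_natCast]
      exact pow_mem hmem k
    · rw [zpow_neg, zpow_natCast, ← Unitary.star_eq_inv]
      exact star_mem (pow_mem hmem k)
  | add x y hx hy => rw [map_add]; exact add_mem hx hy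
  | smul c x hx => rw [map_smul]; exact SMulMemClass.smul_mem c hx
  | closed => exact (StarAlgebra.elemental.isClosed ℂ _).preimage (map_continuous (fiber hρ 0))

theorem IsRightRegular.eq_zero_or_one_of_isStarProjection (hN : 2 ≤ N) {p : groupCStar ρ}
    (hp : IsStarProjection p) : p = 0 ∨ p = 1 := by
  have hzero {q : groupCStar ρ} (hq : IsStarProjection q) (hq₀ : fiber hρ 0 q = 0) : q = 0 :=
    eq_zero_of_forall_fiber_eq_zero hρ hN fun _ => fiber_eq_zero_of_mem hρ hN hq hq₀
  let p₀ : StarAlgebra.elemental ℂ (bilateralShift : L2 ℤ →L[ℂ] L2 ℤ) :=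
    ⟨fiber hρ 0 p, fiber_zero_mem_elemental hρ p⟩
  have hp₀ : IsIdempotentElem p₀ := Subtype.ext (hp.isIdempotentElem.map (fiber hρ 0))
  rcases eq_zero_or_one_of_isIdempotentElem_elemental isPreconnected_spectrum_bilateralShift hp₀
    with h | h
  · exact .inl (hzero hp (congrArg Subtype.val h))
  · refine .inr (sub_eq_zero.mp (hzero hp.one_sub ?_)).symm
    rw [map_sub, map_one, sub_eq_zero]
    exact (congrArg Subtype.val h).symm

theorem WeaklyContained.eq_zero_or_one_of_isStarProjection (hN : 2 ≤ N) {A : Type*}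
    [CStarAlgebra A] {π : BS N →* unitary A} (hρπ : WeaklyContained ρ π)
    (hπρ : WeaklyContained π ρ) {p : groupCStar π} (hp : IsStarProjection p) : p = 0 ∨ p = 1 := by
  obtain ⟨F, hF⟩ := hρπ.exists_starAlgHom
  set F' : groupCStar π →⋆ₐ[ℂ] groupCStar ρ := F.codRestrict _ (groupCStar.map_mem hF)
  have hinj : Function.Injective F' :=
    (StarAlgHom.injective_codRestrict ..).mpr (hπρ.injective hF)
  exact (hρ.eq_zero_or_one_of_isStarProjection hN (hp.map F')).imp
    (map_eq_zero_iff F' hinj).mp (map_eq_one_iff F' hinj).mp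

end Projections

end BaumslagSolitar

open BaumslagSolitar in
theorem statement_1_general {N : ℕ} (hN : 2 ≤ N) {H : Type*} [NormedAddCommGroup H]
    [InnerProductSpace ℂ H] [CompleteSpace H] {π : BS N →* unitary (H →L[ℂ] H)} {ψ : H}
    (hψ : IsOrthonormalWavelet π ψ) {ρ : BS N →* unitary (L2 (BS N) →L[ℂ] L2 (BS N))}
    (hρ : IsRightRegular ρ) :
    (∀ a : BS N →₀ ℂ, ‖groupEval π a‖ = ‖groupEval ρ a‖) ∧
      (∃ F : groupCStar ρ →⋆ₐ[ℂ] (H →L[ℂ] H), Function.Injective F ∧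
        ∀ g, F (groupCStar.of ρ g) = π g) ∧
      ∀ a ∈ groupCStar π, IsConnected (spectrum ℂ a) := by
  have : NeZero N := ⟨by lia⟩
  have hρπ : WeaklyContained ρ π := hψ.weaklyContained hρ
  have hπρ : WeaklyContained π ρ := hasFolnerSets_BS.weaklyContained hρ π
  obtain ⟨F, hF⟩ := hπρ.exists_starAlgHom
  refine ⟨fun a => (hπρ a).antisymm (hρπ a), ⟨F, hρπ.injective hF, hF⟩, fun a ha => ?_⟩
  have : Nontrivial H := ⟨_, 0, Orthonormal.ne_zero hψ (0, 0)⟩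
  exact isConnected_spectrum_of_mem (groupCStar π)
    (fun _ => hρπ.eq_zero_or_one_of_isStarProjection hρ hN hπρ) ha

open MeasureTheory Real Complex Filter Finset in
/-- Theorem 2.1. Let `π` be a unitary representation of
`BS(1,N)` admitting a wavelet `{ψ_1, …, ψ_p}` (i.e. the family
`π(u^j t^k) ψ_i` is an orthonormal basis).  Then `π` is weakly equivalent to the
right regular representation `ρ` of `BS(1,N)` — formalized by the equality of
the C*-norms `‖π(a)‖ = ‖ρ(a)‖` for every element `a` of the group algebra — so
`π` extends to a faithful representation of the reduced C*-algebra
`C*_r(BS(1,N))` (the C*-algebra generated by the right regular representation);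
moreover every element of the C*-algebra generated by `π(BS(1,N))` has a
connected spectrum. -/
theorem statement_1 (N : ℕ) (hN : 2 ≤ N)
    {H : Type} [NormedAddCommGroup H] [InnerProductSpace ℂ H] [CompleteSpace H]
    (pRep : BS N →* unitary (H →L[ℂ] H))
    -- `{ψ_1, …, ψ_p}` is a wavelet for `π`:
    (p : ℕ) (hp : 0 < p) (ψ : Fin p → H)
    (hon : Orthonormal ℂ (fun jki : ℤ × ℤ × Fin p =>
      ((pRep (BS.u N ^ jki.1 * BS.t N ^ jki.2.1) : H →L[ℂ] H)) (ψ jki.2.2)))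
    (hdense : (Submodule.span ℂ (Set.range (fun jki : ℤ × ℤ × Fin p =>
        ((pRep (BS.u N ^ jki.1 * BS.t N ^ jki.2.1) : H →L[ℂ] H)) (ψ jki.2.2)))).topologicalClosure
      = ⊤)
    -- `ρ` is the right regular representation of `BS(1,N)` on `ℓ²(BS(1,N))`:
    (ρ : BS N →* unitary
      (lp (fun _ : BS N => ℂ) 2 →L[ℂ] lp (fun _ : BS N => ℂ) 2))
    (hρ : ∀ (g : BS N) (f : lp (fun _ : BS N => ℂ) 2) (x : BS N),
      (((ρ g : lp (fun _ : BS N => ℂ) 2 →L[ℂ] lp (fun _ : BS N => ℂ) 2) f :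
        lp (fun _ : BS N => ℂ) 2) : ∀ _ : BS N, ℂ) x
        = (f : ∀ _ : BS N, ℂ) (x * g)) :
    -- weak equivalence of `π` and `ρ`: equality of C*-norms on the group algebra
    (∀ a : BS N →₀ ℂ,
      ‖∑ g ∈ a.support, a g • ((pRep g : H →L[ℂ] H))‖
        = ‖∑ g ∈ a.support, a g •
            ((ρ g : lp (fun _ : BS N => ℂ) 2 →L[ℂ] lp (fun _ : BS N => ℂ) 2))‖) ∧
    -- `π` extends to a faithful (injective) representation of `C*_r(BS(1,N))`,
    -- the C*-algebra generated by the right regular representation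
    (∃ F : (StarAlgebra.adjoin ℂ (Set.range (fun g : BS N =>
          ((ρ g : lp (fun _ : BS N => ℂ) 2 →L[ℂ] lp (fun _ : BS N => ℂ) 2))))).topologicalClosure
        →⋆ₐ[ℂ] (H →L[ℂ] H),
      Function.Injective F ∧
      ∀ g : BS N,
        F ⟨(ρ g : lp (fun _ : BS N => ℂ) 2 →L[ℂ] lp (fun _ : BS N => ℂ) 2),
            (StarSubalgebra.le_topologicalClosure _)
              (StarAlgebra.subset_adjoin ℂ _ ⟨g, rfl⟩)⟩
          = (pRep g : H →L[ℂ] H)) ∧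
    -- every element of the C*-algebra generated by `π(BS(1,N))` has connected
    -- spectrum
    (∀ a : H →L[ℂ] H,
      a ∈ (StarAlgebra.adjoin ℂ (Set.range (fun g : BS N =>
          ((pRep g : H →L[ℂ] H))))).topologicalClosure →
      IsConnected (spectrum ℂ a)) := by
  have hinj : Function.Injective fun jk : ℤ × ℤ => (jk.1, jk.2, (⟨0, hp⟩ : Fin p)) := by
    rintro ⟨j, k⟩ ⟨j', k'⟩ ⟨⟩
    rfl
  exact statement_1_general hN (ψ := ψ ⟨0, hp⟩) (hon.comp _ hinj) hρ
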